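/- arXiv:2012.06358 — 3 statements merged into one kernel-verified Lean document; each statement's English description precedes it below -/
import Mathlib

section
/- Let i, j ≥ 1 and n ≥ i + j be integers. Let N be the number of minimal factorizations f of the (n+1)-cycle (i.e. f ∈ 𝔐_{n+1}) with T_1(f) = i and T_2(f) = j. Then, as an identity in ℚ, (n−1)·N = (n!/(n−i−j)!)·(n−1)^{n−i−j}·[ (i+j−2)(n−1)/((i+j−1)!·(n−i−j+1)) + (i+j−1)/(i!·j!) − (i+j−1)/(i+j)! ]. (Since |𝔐_{n+1}| = (n+1)^{n−1}, this determines the joint law of (T_1, T_2) under the uniform distribution on 𝔐_{n+1}; this is the paper's Theorem 1.1, stated with its cycle-length index made precise.) -/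
/- `τ` is a minimal factorization: every entry is a transposition and the composition
`τ_{k} ∘ ⋯ ∘ τ_1` (rightmost applied first) is the cycle `(1 2 … m)`, i.e. `finRotate m`. -/
def IsMinFact {k m : ℕ} (τ : Fin k → Equiv.Perm (Fin m)) : Prop :=
  (∀ ℓ, (τ ℓ).IsSwap) ∧ (List.ofFn τ).reverse.prod = finRotate m

/- `T_v`: the number of transpositions of `τ` in which `v` appears. -/
def Tcount {k m : ℕ} (τ : Fin k → Equiv.Perm (Fin m)) (v : Fin m) : ℕ :=
  (Finset.univ.filter fun ℓ => τ ℓ v ≠ v).card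

/-!
A minimal factorization is a shortest way to write the cycle as a product of transpositions, and
its first transposition cuts the cycle into two disjoint cycles. Give the vertex `1` the weight
`x`, the vertex `2` the weight `y` and every other vertex the weight `1`, and give a factorization
the product of the weights of the vertices moved by its transpositions, so that `f` has weight
`x ^ T_1(f) * y ^ T_2(f)`. Dividing the total weight by the factorial of the number of
transpositions absorbs the shuffles of two factorizations and makes it multiplicative over disjoint
permutations. Sorting by the first transposition is then a quadratic recursion on cycles.

The binomial identities of Abel solve this recursion. A cycle of length `n + 1` with a single
weighted point has normalized total weight `A x = x (x + n) ^ (n - 1) / n!`; with two adjacent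
weighted points, `x - y` times the normalized total weight is
`(x - y) A(x + y - 1) + x (y - 1) A(x - 1) - y (x - 1) A(y - 1)`. Dividing by `x - y` in the
polynomial ring expresses the number sought through two explicit coefficients of
`(z - 1) (z + n - 1) ^ (n - 1)`.
-/

namespace MinimalFactorization

open Equiv Equiv.Perm Finset

/-! ### Cutting a cycle by a transposition -/

section CutCycle

variable {α : Type*}

/-- The `s + 1` entries of `l` at positions `p + 1, …, p + s + 1`: one of the two cycles into which
the transposition of the entries at positions `p` and `p + s + 1` cuts the cycle of `l`. -/
def innerArc (l : List α) (p s : ℕ) : List α := (l.drop (p + 1)).take (s + 1)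

/-- The entries of `l` outside `innerArc l p s`: the other one of the two cycles. -/
def outerArc (l : List α) (p s : ℕ) : List α := l.take (p + 1) ++ l.drop (p + s + 2)

lemma outerArc_append_innerArc_perm (l : List α) (p s : ℕ) :
    (outerArc l p s ++ innerArc l p s).Perm l := by
  have hl : l = l.take (p + 1) ++ (innerArc l p s ++ l.drop (p + s + 2)) := by
    have hdrop : l.drop (p + s + 2) = (l.drop (p + 1)).drop (s + 1) := by
      rw [List.drop_drop]; congr 1; omega
    rw [innerArc, hdrop, List.take_append_drop, List.take_append_drop]
  conv_rhs => rw [hl]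
  rw [outerArc, List.append_assoc]
  exact List.perm_append_comm.append_left _

lemma nodup_outerArc_append_innerArc {l : List α} (hl : l.Nodup) (p s : ℕ) :
    (outerArc l p s ++ innerArc l p s).Nodup :=
  (outerArc_append_innerArc_perm l p s).nodup_iff.2 hl

lemma nodup_outerArc {l : List α} (hl : l.Nodup) (p s : ℕ) : (outerArc l p s).Nodup :=
  (nodup_outerArc_append_innerArc hl p s).of_append_left

lemma nodup_innerArc {l : List α} (hl : l.Nodup) (p s : ℕ) : (innerArc l p s).Nodup :=
  (nodup_outerArc_append_innerArc hl p s).of_append_right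

lemma map_outerArc {β : Type*} (x : α → β) (l : List α) (p s : ℕ) :
    (outerArc l p s).map x = outerArc (l.map x) p s := by
  simp [outerArc]

lemma map_innerArc {β : Type*} (x : α → β) (l : List α) (p s : ℕ) :
    (innerArc l p s).map x = innerArc (l.map x) p s := by
  simp [innerArc]

lemma length_innerArc {l : List α} {p s : ℕ} (h : p + s + 1 < l.length) :
    (innerArc l p s).length = s + 1 := by
  rw [innerArc, List.length_take, List.length_drop]; omega

variable [DecidableEq α]

lemma disjoint_formPerm {l l' : List α} (h : l.Disjoint l') :
    Disjoint l.formPerm l'.formPerm := by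
  intro x
  by_cases hx : x ∈ l
  · exact Or.inr (List.formPerm_apply_of_notMem fun hx' => h hx hx')
  · exact Or.inl (List.formPerm_apply_of_notMem hx)

lemma disjoint_formPerm_outerArc_innerArc {l : List α} (hl : l.Nodup) (p s : ℕ) :
    Disjoint (outerArc l p s).formPerm (innerArc l p s).formPerm :=
  disjoint_formPerm (List.disjoint_of_nodup_append (nodup_outerArc_append_innerArc hl p s))

lemma formPerm_append_cons (u : List α) (a : α) (v : List α) :
    (u ++ a :: v).formPerm = (u ++ [a]).formPerm * (a :: v).formPerm := by
  induction u with
  | nil => simp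
  | cons c u ih =>
    cases u with
    | nil => simp
    | cons d u =>
      simp only [List.cons_append, List.formPerm_cons_cons] at ih ⊢
      rw [ih, mul_assoc]

/-- Rotate the cycle so that `b` comes last, split it at `a`, and rotate both pieces. -/
lemma formPerm_eq_mul_mul_swap {u v w : List α} {a b : α}
    (h : (u ++ a :: (v ++ b :: w)).Nodup) :
    (u ++ a :: (v ++ b :: w)).formPerm =
      (u ++ a :: w).formPerm * (v ++ [b]).formPerm * swap a b := by
  have hrot : (u ++ a :: (v ++ b :: w)).IsRotated ((w ++ u) ++ a :: (v ++ [b])) := by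
    simpa using List.isRotated_append (l := u ++ a :: (v ++ [b])) (l' := w)
  have hnodup : ((w ++ u) ++ a :: (v ++ [b])).Nodup := hrot.nodup_iff.1 h
  have houter : (w ++ u ++ [a]).formPerm = (u ++ a :: w).formPerm := by
    refine List.formPerm_eq_of_isRotated (hnodup.sublist (by simp)) ?_
    simpa using List.isRotated_append (l := w) (l' := u ++ [a])
  have hinner : (a :: (v ++ [b])).formPerm = (v ++ [b]).formPerm * swap a b := by
    rw [List.formPerm_eq_of_isRotated hnodup.of_append_right
      (List.isRotated_append (l := [a]) (l' := v ++ [b])), List.append_assoc, List.singleton_append,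
      List.formPerm_append_pair, swap_comm]
  rw [List.formPerm_eq_of_isRotated h hrot, formPerm_append_cons, houter, hinner, mul_assoc]

lemma formPerm_mul_swap_getElem {l : List α} (hl : l.Nodup) {p s : ℕ} (h : p + s + 1 < l.length) :
    l.formPerm * swap l[p] l[p + s + 1] =
      (outerArc l p s).formPerm * (innerArc l p s).formPerm := by
  have hdecomp : l = l.take p ++ l[p] ::
      ((l.drop (p + 1)).take s ++ l[p + s + 1] :: l.drop (p + s + 2)) := by
    conv_lhs => rw [← List.take_append_drop p l, ← List.cons_getElem_drop_succ (h := by omega),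
      ← List.take_append_drop s (l.drop (p + 1)), List.drop_drop,
      show p + 1 + s = p + s + 1 by omega, ← List.cons_getElem_drop_succ (h := h)]
  have houter : outerArc l p s = l.take p ++ l[p] :: l.drop (p + s + 2) := by
    rw [outerArc, ← List.take_concat_get' l p (by omega), List.append_assoc,
      List.singleton_append]
  have hinner : innerArc l p s = (l.drop (p + 1)).take s ++ [l[p + s + 1]] := by
    rw [innerArc, ← List.take_concat_get' (l.drop (p + 1)) s (by simp; omega)]
    simp [show p + 1 + s = p + s + 1 by omega]
  have hcut := formPerm_eq_mul_mul_swap (hdecomp ▸ hl)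
  rw [← hdecomp, ← houter, ← hinner] at hcut
  rw [hcut, mul_assoc, swap_mul_self, mul_one]

end CutCycle

section SameCycle

variable {α : Type*}

lemma not_sameCycle_of_disjoint {π ρ : Perm α} (h : Disjoint π ρ) {a b : α} (hab : a ≠ b)
    (hπ : π.SameCycle a b) : ¬ ρ.SameCycle a b := fun hρ =>
  (h a).elim (fun hfix => hab (hπ.eq_of_left hfix)) (fun hfix => hab (hρ.eq_of_left hfix))

lemma sameCycle_mul_iff_of_apply_eq_self {π ρ : Perm α} (h : Disjoint π ρ) {a b : α}
    (ha : ρ a = a) : (π * ρ).SameCycle a b ↔ π.SameCycle a b := by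
  have hpow (n : ℤ) : ((π * ρ) ^ n) a = (π ^ n) a := by
    rw [h.commute.mul_zpow, Perm.mul_apply, zpow_apply_eq_self_of_apply_eq_self ha n]
  simp only [SameCycle, hpow]

lemma sameCycle_mul_iff {π ρ : Perm α} (h : Disjoint π ρ) {a b : α} (hab : a ≠ b) :
    (π * ρ).SameCycle a b ↔ π.SameCycle a b ∨ ρ.SameCycle a b := by
  rcases h a with hπ | hρ
  · rw [h.commute.eq, sameCycle_mul_iff_of_apply_eq_self h.symm hπ, or_iff_right]
    exact fun hs => hab (hs.eq_of_left hπ)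
  · rw [sameCycle_mul_iff_of_apply_eq_self h hρ, or_iff_left]
    exact fun hs => hab (hs.eq_of_left hρ)

lemma sameCycle_mul_swap [Finite α] [DecidableEq α] {π : Perm α} {a b : α} (h : ¬ π.SameCycle a b) :
    (π * swap a b).SameCycle a b := by
  by_contra hab
  have horbit (k : ℕ) : (π * swap a b).SameCycle a ((π ^ (k + 1)) b) := by
    induction k with
    | zero => simpa using (sameCycle_apply_right (f := π * swap a b)).2 (SameCycle.refl _ a)
    | succ k ih =>
      have hne_a : (π ^ (k + 1)) b ≠ a := fun he => h ⟨-(k + 1 : ℕ), by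
        rw [zpow_neg, zpow_natCast, inv_eq_iff_eq, he]⟩
      have hne_b : (π ^ (k + 1)) b ≠ b := fun he => hab (by rwa [he] at ih)
      simpa [swap_apply_of_ne_of_ne hne_a hne_b, pow_succ' π (k + 1)]
        using sameCycle_apply_right.2 ih
  have hreturn := horbit (orderOf π - 1)
  rw [Nat.sub_add_cancel (orderOf_pos π), pow_orderOf_eq_one] at hreturn
  exact hab hreturn

lemma sameCycle_formPerm_getElem [DecidableEq α] {l : List α} (hl : l.Nodup)
    (hlen : 2 ≤ l.length) {p q : ℕ} (hp : p < l.length) (hq : q < l.length) :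
    l.formPerm.SameCycle l[p] l[q] :=
  (List.isCycle_formPerm hl hlen).sameCycle
    ((List.formPerm_apply_mem_ne_self_iff _ hl _ (List.getElem_mem _)).2 hlen)
    ((List.formPerm_apply_mem_ne_self_iff _ hl _ (List.getElem_mem _)).2 hlen)

end SameCycle

/-! ### The number of transpositions needed to write a permutation -/

section SwapLength

variable {α : Type*} [Fintype α] [DecidableEq α]

/-- The least number of transpositions whose product is `π`, encoded through the cycle type: a cycle
of length `k` needs `k - 1` of them. -/
def swapLength (π : Perm α) : ℕ := (π.cycleType.map (· - 1)).sum

lemma swapLength_eq_zero_iff {π : Perm α} : swapLength π = 0 ↔ π = 1 := by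
  refine ⟨fun h => ?_, fun h => by simp [h, swapLength]⟩
  rw [← cycleType_eq_zero]
  refine Multiset.eq_zero_of_forall_notMem fun k hk => ?_
  have hzero : k - 1 = 0 :=
    Multiset.sum_eq_zero_iff.1 h _ (Multiset.mem_map_of_mem _ hk)
  have := two_le_of_mem_cycleType hk
  omega

lemma swapLength_mul {π ρ : Perm α} (h : Disjoint π ρ) :
    swapLength (π * ρ) = swapLength π + swapLength ρ := by
  simp [swapLength, h.cycleType_mul]

lemma swapLength_formPerm {l : List α} (hl : l.Nodup) :
    swapLength l.formPerm = l.length - 1 := by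
  by_cases h : 2 ≤ l.length
  · rw [swapLength, (List.isCycle_formPerm hl h).cycleType,
      List.support_formPerm_of_nodup l hl (by rintro x rfl; simp at h),
      List.toFinset_card_of_nodup hl]
    simp
  · rw [swapLength_eq_zero_iff.2 ((List.formPerm_eq_one_iff _ hl).2 (by omega))]
    omega

lemma swapLength_formPerm_mul_swap {l : List α} (hl : l.Nodup) {a b : α} (ha : a ∈ l) (hb : b ∈ l)
    (hab : a ≠ b) : swapLength (l.formPerm * swap a b) + 1 = swapLength l.formPerm := by
  obtain ⟨p, hp, rfl⟩ := List.mem_iff_getElem.1 ha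
  obtain ⟨q, hq, rfl⟩ := List.mem_iff_getElem.1 hb
  wlog hpq : p < q generalizing p q
  · have hqp : q ≠ p := by rintro rfl; exact hab rfl
    rw [swap_comm]
    exact this q hq hb p hp ha hab.symm (by omega)
  obtain ⟨s, rfl⟩ : ∃ s, q = p + s + 1 := ⟨q - p - 1, by omega⟩
  have hlen := (outerArc_append_innerArc_perm l p s).length_eq
  rw [List.length_append, length_innerArc hq] at hlen
  rw [formPerm_mul_swap_getElem hl hq, swapLength_mul (disjoint_formPerm_outerArc_innerArc hl p s),
    swapLength_formPerm (nodup_outerArc hl p s), swapLength_formPerm (nodup_innerArc hl p s),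
    swapLength_formPerm hl, length_innerArc hq]
  have : (outerArc l p s).length ≠ 0 := by simp [outerArc]; grind
  omega

lemma mem_support_of_sameCycle {π : Perm α} {a b : α} (hab : a ≠ b) (h : π.SameCycle a b) :
    a ∈ π.support ∧ b ∈ π.support := by
  simp only [mem_support]
  exact ⟨fun hfix => hab (h.eq_of_left hfix), fun hfix => hab (h.eq_of_right hfix)⟩

lemma swapLength_mul_swap_of_sameCycle {π : Perm α} {a b : α} (hab : a ≠ b)
    (h : π.SameCycle a b) : swapLength (π * swap a b) + 1 = swapLength π := by
  have ha := (mem_support_of_sameCycle hab h).1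
  set l := π.toList a
  have hl : l.Nodup := nodup_toList π a
  have hal : a ∈ l := mem_toList_iff.2 ⟨SameCycle.refl _ _, ha⟩
  have hbl : b ∈ l := mem_toList_iff.2 ⟨h, ha⟩
  obtain ⟨ρ, hρ, hπ⟩ : ∃ ρ, Disjoint ρ l.formPerm ∧ π = ρ * l.formPerm :=
    ⟨π * l.formPerm⁻¹, by
      rw [formPerm_toList]
      exact disjoint_mul_inv_of_mem_cycleFactorsFinset (cycleOf_mem_cycleFactorsFinset_iff.2 ha),
      by simp⟩
  have hρ' : Disjoint ρ (l.formPerm * swap a b) := by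
    have hswap : (swap a b).support ⊆ l.formPerm.support := by
      rw [support_swap hab, formPerm_toList, insert_subset_iff, singleton_subset_iff]
      exact ⟨mem_support_cycleOf_iff.2 ⟨.refl _ _, ha⟩, mem_support_cycleOf_iff.2 ⟨h, ha⟩⟩
    exact hρ.mul_right (hρ.mono le_rfl hswap)
  rw [hπ, mul_assoc, swapLength_mul hρ', swapLength_mul hρ, add_assoc,
    swapLength_formPerm_mul_swap hl hal hbl hab]

lemma swapLength_mul_swap_of_not_sameCycle {π : Perm α} {a b : α} (h : ¬ π.SameCycle a b) :
    swapLength (π * swap a b) = swapLength π + 1 := by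
  have hab : a ≠ b := by rintro rfl; exact h (.refl _ _)
  rw [← swapLength_mul_swap_of_sameCycle hab (sameCycle_mul_swap h), mul_assoc, swap_mul_self,
    mul_one]

lemma swapLength_le_mul_swap_add_one (π : Perm α) {t : Perm α} (ht : t.IsSwap) :
    swapLength π ≤ swapLength (π * t) + 1 := by
  obtain ⟨a, b, hab, rfl⟩ := ht
  by_cases h : π.SameCycle a b
  · exact (swapLength_mul_swap_of_sameCycle hab h).ge
  · rw [swapLength_mul_swap_of_not_sameCycle h]; omega

end SwapLength

/-! ### Weighted sums over minimal factorizations -/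

section Counting

variable {α : Type*} [Fintype α] [DecidableEq α]

open Classical in
/-- The factorizations of `π` into `k` transpositions: the sequences `(τ_1, …, τ_k)` with
`τ_k ∘ ⋯ ∘ τ_1 = π`. -/
noncomputable def factorizations (k : ℕ) (π : Perm α) : Finset (Fin k → Perm α) :=
  {f | (∀ ℓ, (f ℓ).IsSwap) ∧ (List.ofFn f).reverse.prod = π}

lemma mem_factorizations {k : ℕ} {π : Perm α} {f : Fin k → Perm α} :
    f ∈ factorizations k π ↔ (∀ ℓ, (f ℓ).IsSwap) ∧ (List.ofFn f).reverse.prod = π := by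
  simp [factorizations]

lemma cons_mem_factorizations {k : ℕ} {π t : Perm α} {f : Fin k → Perm α} :
    (Fin.cons t f : Fin (k + 1) → Perm α) ∈ factorizations (k + 1) π ↔
      t.IsSwap ∧ f ∈ factorizations k (π * t) := by
  simp only [mem_factorizations, Fin.forall_fin_succ, Fin.cons_zero, Fin.cons_succ, List.ofFn_succ,
    List.reverse_cons, List.prod_append, List.prod_singleton, and_assoc]
  refine and_congr_right fun ht => and_congr_right fun _ => ?_
  obtain ⟨a, b, -, rfl⟩ := ht
  rw [← eq_mul_inv_iff_mul_eq, swap_inv]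

section CommSemiring

variable {R : Type*} [CommSemiring R]

/-- The weight `x a * x b` of a transposition `(a b)`. -/
def swapWeight (x : α → R) (t : Perm α) : R := ∏ v ∈ t.support, x v

lemma swapWeight_swap (x : α → R) {a b : α} (hab : a ≠ b) :
    swapWeight x (swap a b) = x a * x b := by
  rw [swapWeight, support_swap hab, prod_pair hab]

lemma prod_swapWeight (x : α → R) {k : ℕ} (f : Fin k → Perm α) :
    ∏ ℓ, swapWeight x (f ℓ) = ∏ v, x v ^ #{ℓ | f ℓ v ≠ v} := by
  have hweight (ℓ : Fin k) : swapWeight x (f ℓ) = ∏ v, if f ℓ v ≠ v then x v else 1 :=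
    prod_filter ..
  simp only [hweight]
  rw [prod_comm]
  simp only [← prod_filter, prod_const]

/-- The total weight of the factorizations of `π` into `k` transpositions. -/
noncomputable def factSum (x : α → R) (k : ℕ) (π : Perm α) : R :=
  ∑ f ∈ factorizations k π, ∏ ℓ, swapWeight x (f ℓ)

lemma factSum_zero (x : α → R) (π : Perm α) : factSum x 0 π = if π = 1 then 1 else 0 := by
  have hmem : factorizations 0 π = if π = 1 then univ else ∅ := by
    ext f
    split_ifs with h <;> simp [mem_factorizations, h, eq_comm, eq_iff_true_of_subsingleton]
  rw [factSum, hmem]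
  split_ifs <;> simp

open Classical in
lemma factSum_succ (x : α → R) (k : ℕ) (π : Perm α) :
    factSum x (k + 1) π = ∑ t with t.IsSwap, swapWeight x t * factSum x k (π * t) := by
  have hcons : factSum x (k + 1) π =
      ∑ t : Perm α, ∑ f : Fin k → Perm α, if t.IsSwap ∧ f ∈ factorizations k (π * t) then
        swapWeight x t * ∏ ℓ, swapWeight x (f ℓ) else 0 := by
    rw [factSum, ← univ_inter (factorizations (k + 1) π), ← sum_ite_mem,
      ← (Fin.consEquiv fun _ => Perm α).sum_comp, Fintype.sum_prod_type]
    exact sum_congr rfl fun t _ => sum_congr rfl fun f _ =>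
      if_congr cons_mem_factorizations (Fin.prod_univ_succ _) rfl
  rw [hcons, sum_filter]
  refine sum_congr rfl fun t _ => ?_
  split_ifs with ht <;> simp [ht, factSum, mul_sum, sum_ite_mem]

lemma factSum_eq_zero (x : α → R) {k : ℕ} {π : Perm α} (h : k < swapLength π) :
    factSum x k π = 0 := by
  classical
  induction k generalizing π with
  | zero => rw [factSum_zero, if_neg (swapLength_eq_zero_iff.not.1 h.ne')]
  | succ k ih =>
    rw [factSum_succ]
    refine sum_eq_zero fun t ht => ?_
    have := swapLength_le_mul_swap_add_one π (mem_filter.1 ht).2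
    rw [ih (by omega), mul_zero]

end CommSemiring

/-! ### The first transposition of a minimal factorization -/

open Classical in
/-- The transpositions that can come first in a minimal factorization of `π`: those which cut one
of the cycles of `π` into two, see `swap_mem_cuttingSwaps`. -/
noncomputable def cuttingSwaps (π : Perm α) : Finset (Perm α) :=
  {t | t.IsSwap ∧ swapLength (π * t) + 1 = swapLength π}

lemma mem_cuttingSwaps {π t : Perm α} :
    t ∈ cuttingSwaps π ↔ t.IsSwap ∧ swapLength (π * t) + 1 = swapLength π := by
  simp [cuttingSwaps]

lemma swap_mem_cuttingSwaps {π : Perm α} {a b : α} (hab : a ≠ b) :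
    swap a b ∈ cuttingSwaps π ↔ π.SameCycle a b := by
  rw [mem_cuttingSwaps, and_iff_right ⟨a, b, hab, rfl⟩]
  refine ⟨fun h => ?_, swapLength_mul_swap_of_sameCycle hab⟩
  by_contra hn
  rw [swapLength_mul_swap_of_not_sameCycle hn] at h
  omega

lemma support_subset_of_mem_cuttingSwaps {π t : Perm α} (h : t ∈ cuttingSwaps π) :
    t.support ⊆ π.support := by
  obtain ⟨a, b, hab, rfl⟩ := (mem_cuttingSwaps.1 h).1
  rw [support_swap hab, insert_subset_iff, singleton_subset_iff]
  exact mem_support_of_sameCycle hab ((swap_mem_cuttingSwaps hab).1 h)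

lemma disjoint_of_mem_cuttingSwaps {π ρ t : Perm α} (h : Disjoint π ρ) (ht : t ∈ cuttingSwaps π) :
    Disjoint t ρ :=
  h.mono (support_subset_of_mem_cuttingSwaps ht) le_rfl

lemma cuttingSwaps_mul {π ρ : Perm α} (h : Disjoint π ρ) :
    cuttingSwaps (π * ρ) = cuttingSwaps π ∪ cuttingSwaps ρ := by
  ext t
  rw [mem_union]
  by_cases ht : t.IsSwap
  · obtain ⟨a, b, hab, rfl⟩ := ht
    simp only [swap_mem_cuttingSwaps hab, sameCycle_mul_iff h hab]
  · simp [mem_cuttingSwaps, ht]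

lemma disjoint_cuttingSwaps {π ρ : Perm α} (h : Disjoint π ρ) :
    _root_.Disjoint (cuttingSwaps π) (cuttingSwaps ρ) := by
  refine Finset.disjoint_left.2 fun t hπ hρ => ?_
  obtain ⟨a, b, hab, rfl⟩ := (mem_cuttingSwaps.1 hπ).1
  exact not_sameCycle_of_disjoint h hab ((swap_mem_cuttingSwaps hab).1 hπ)
    ((swap_mem_cuttingSwaps hab).1 hρ)

section Field

variable {K : Type*} [Field K]

/-- The total weight of the minimal factorizations of `π`, divided by the factorial of their
length. -/
noncomputable def minSum (x : α → K) (π : Perm α) : K :=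
  factSum x (swapLength π) π / (swapLength π).factorial

lemma minSum_one (x : α → K) : minSum x (1 : Perm α) = 1 := by
  simp [minSum, swapLength_eq_zero_iff.2, factSum_zero]

lemma factSum_eq_sum_cuttingSwaps (x : α → K) {k : ℕ} {π : Perm α} (hk : swapLength π = k + 1) :
    factSum x (k + 1) π = ∑ t ∈ cuttingSwaps π, swapWeight x t * factSum x k (π * t) := by
  classical
  rw [factSum_succ]
  refine (sum_subset (fun t ht => by simpa using (mem_cuttingSwaps.1 ht).1) fun t ht hnt => ?_).symm
  have hswap := (mem_filter.1 ht).2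
  have hle := swapLength_le_mul_swap_add_one π hswap
  have hne : swapLength (π * t) + 1 ≠ swapLength π := fun h =>
    hnt (mem_cuttingSwaps.2 ⟨hswap, h⟩)
  have hlt : k < swapLength (π * t) := by omega
  rw [factSum_eq_zero x hlt, mul_zero]

variable [CharZero K]

lemma swapLength_mul_minSum (x : α → K) (π : Perm α) :
    (swapLength π : K) * minSum x π = ∑ t ∈ cuttingSwaps π, swapWeight x t * minSum x (π * t) := by
  rcases hk : swapLength π with _ | k
  · simp [cuttingSwaps, hk]
  · have hcut (t : Perm α) (ht : t ∈ cuttingSwaps π) :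
        swapWeight x t * minSum x (π * t) = swapWeight x t * factSum x k (π * t) / k.factorial := by
      have hlen := (mem_cuttingSwaps.1 ht).2
      rw [minSum, show swapLength (π * t) = k by omega, mul_div_assoc]
    rw [sum_congr rfl hcut, ← sum_div, ← factSum_eq_sum_cuttingSwaps x hk, minSum, hk,
      Nat.factorial_succ, Nat.cast_mul, mul_div_assoc',
      mul_div_mul_left _ _ (Nat.cast_ne_zero.2 k.succ_ne_zero)]

/-- A minimal factorization of `π * ρ` is a shuffle of minimal factorizations of `π` and `ρ`; the
factorials in `minSum` absorb the number of shuffles. -/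
lemma minSum_mul (x : α → K) {π ρ : Perm α} (h : Disjoint π ρ) :
    minSum x (π * ρ) = minSum x π * minSum x ρ := by
  obtain ⟨k, hk⟩ : ∃ k, swapLength π + swapLength ρ = k := ⟨_, rfl⟩
  induction k generalizing π ρ with
  | zero =>
    rw [swapLength_eq_zero_iff.1 (show swapLength π = 0 by omega),
      swapLength_eq_zero_iff.1 (show swapLength ρ = 0 by omega)]
    simp [minSum_one]
  | succ k ih =>
    have hleft (t : Perm α) (ht : t ∈ cuttingSwaps π) :
        minSum x (π * ρ * t) = minSum x (π * t) * minSum x ρ := by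
      have htρ := disjoint_of_mem_cuttingSwaps h ht
      have hlen := (mem_cuttingSwaps.1 ht).2
      rw [mul_assoc π, ← htρ.commute.eq, ← mul_assoc, ih (h.mul_left htρ) (by omega)]
    have hright (t : Perm α) (ht : t ∈ cuttingSwaps ρ) :
        minSum x (π * ρ * t) = minSum x π * minSum x (ρ * t) := by
      have htπ := disjoint_of_mem_cuttingSwaps h.symm ht
      have hlen := (mem_cuttingSwaps.1 ht).2
      rw [mul_assoc π, ih (h.mul_right htπ.symm) (by omega)]
    have hne : ((swapLength (π * ρ) : ℕ) : K) ≠ 0 := by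
      rw [swapLength_mul h, hk]; exact Nat.cast_ne_zero.2 k.succ_ne_zero
    apply mul_left_cancel₀ hne
    calc (swapLength (π * ρ) : K) * minSum x (π * ρ)
        = ∑ t ∈ cuttingSwaps π, swapWeight x t * minSum x (π * ρ * t) +
            ∑ t ∈ cuttingSwaps ρ, swapWeight x t * minSum x (π * ρ * t) := by
          rw [swapLength_mul_minSum, cuttingSwaps_mul h, sum_union (disjoint_cuttingSwaps h)]
      _ = (∑ t ∈ cuttingSwaps π, swapWeight x t * minSum x (π * t)) * minSum x ρ +
            minSum x π * ∑ t ∈ cuttingSwaps ρ, swapWeight x t * minSum x (ρ * t) := by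
          rw [sum_mul, mul_sum]
          congr 1 <;> refine sum_congr rfl fun t ht => ?_
          · rw [hleft t ht, mul_assoc]
          · rw [hright t ht, mul_left_comm]
      _ = swapLength (π * ρ) * (minSum x π * minSum x ρ) := by
          rw [← swapLength_mul_minSum, ← swapLength_mul_minSum, swapLength_mul h]
          push_cast
          ring

lemma exists_swap_getElem_of_mem_cuttingSwaps_formPerm {l : List α} {t : Perm α}
    (ht : t ∈ cuttingSwaps l.formPerm) :
    ∃ p q : Fin l.length, p < q ∧ swap l[p] l[q] = t := by
  obtain ⟨a, b, hab, rfl⟩ := (mem_cuttingSwaps.1 ht).1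
  obtain ⟨ha, hb⟩ := mem_support_of_sameCycle hab ((swap_mem_cuttingSwaps hab).1 ht)
  obtain ⟨p, hp, rfl⟩ := List.mem_iff_getElem.1 (List.mem_of_formPerm_apply_ne (mem_support.1 ha))
  obtain ⟨q, hq, rfl⟩ := List.mem_iff_getElem.1 (List.mem_of_formPerm_apply_ne (mem_support.1 hb))
  rcases lt_trichotomy p q with hpq | rfl | hqp
  · exact ⟨⟨p, hp⟩, ⟨q, hq⟩, hpq, rfl⟩
  · exact absurd rfl hab
  · exact ⟨⟨q, hq⟩, ⟨p, hp⟩, hqp, swap_comm _ _⟩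

lemma sum_cuttingSwaps_formPerm {M : Type*} [AddCommMonoid M] {l : List α} (hl : l.Nodup)
    (g : Perm α → M) :
    ∑ t ∈ cuttingSwaps l.formPerm, g t =
      ∑ pq : Fin l.length × Fin l.length with pq.1 < pq.2, g (swap l[pq.1] l[pq.2]) := by
  have hne {p q : Fin l.length} (hpq : p < q) : l[p] ≠ l[q] := fun h =>
    hpq.ne (Fin.ext (hl.getElem_inj_iff.1 h))
  symm
  refine sum_nbij (fun pq => swap l[pq.1] l[pq.2]) (fun pq hpq => ?_) ?_ (fun t ht => ?_)
    fun _ _ => rfl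
  · have hlt := (mem_filter.1 hpq).2
    exact (swap_mem_cuttingSwaps (hne hlt)).2 (sameCycle_formPerm_getElem hl (by omega) _ _)
  · rintro ⟨p, q⟩ hpq ⟨p', q'⟩ hpq' heq
    replace hpq : p < q := (mem_filter.1 hpq).2
    replace hpq' : p' < q' := (mem_filter.1 hpq').2
    have hsupport := congrArg Perm.support heq
    simp only [support_swap (hne hpq), support_swap (hne hpq')] at hsupport
    have hp : l[p] ∈ ({l[p'], l[q']} : Finset α) := hsupport ▸ mem_insert_self _ _
    have hq : l[q] ∈ ({l[p'], l[q']} : Finset α) :=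
      hsupport ▸ mem_insert_of_mem (mem_singleton_self _)
    simp only [mem_insert, mem_singleton, Fin.getElem_fin, hl.getElem_inj_iff] at hp hq
    ext <;> simp only <;> omega
  · obtain ⟨p, q, hpq, rfl⟩ := exists_swap_getElem_of_mem_cuttingSwaps_formPerm ht
    exact ⟨(p, q), by simpa using hpq, rfl⟩

lemma sum_lt_eq_sum_antidiagonal {M : Type*} [AddCommMonoid M] {n m : ℕ} (h : n = m + 2)
    (F : ℕ → ℕ → M) :
    ∑ pq : Fin n × Fin n with pq.1 < pq.2, F pq.1 pq.2 =
      ∑ rs ∈ antidiagonal m, ∑ p ∈ range (rs.1 + 1), F p (p + rs.2 + 1) := by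
  subst h
  rw [sum_sigma']
  refine sum_bij' (fun pq _ => ⟨(m + 1 + pq.1 - pq.2, pq.2 - pq.1 - 1), pq.1⟩)
    (fun u hu => (⟨u.2, ?_⟩, ⟨u.2 + u.1.2 + 1, ?_⟩)) ?_ ?_ ?_ ?_ ?_
  iterate 2 simp only [mem_sigma, HasAntidiagonal.mem_antidiagonal, mem_range] at hu; omega
  · rintro ⟨p, q⟩ hpq
    simp only [mem_filter, mem_univ, true_and, mem_sigma, HasAntidiagonal.mem_antidiagonal,
      mem_range] at hpq ⊢
    omega
  · intro u hu
    simp only [mem_filter, mem_univ, true_and, Fin.mk_lt_mk]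
    omega
  · rintro ⟨p, q⟩ hpq
    simp only [mem_filter, mem_univ, true_and] at hpq
    ext
    · rfl
    · simp only; omega
  · rintro ⟨⟨r, s⟩, p⟩ hu
    simp only [mem_sigma, HasAntidiagonal.mem_antidiagonal, mem_range] at hu
    simp only [Sigma.mk.injEq, Prod.mk.injEq, heq_eq_eq, and_true]
    omega
  · rintro ⟨p, q⟩ hpq
    simp only [mem_filter, mem_univ, true_and] at hpq
    congr 1
    simp only
    omega

/-- The transposition of the entries at positions `p` and `p + s + 1` cuts the cycle of `l`. -/
lemma minSum_formPerm_rec (x : α → K) {l : List α} (hl : l.Nodup) {m : ℕ}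
    (hlen : l.length = m + 2) :
    (m + 1 : K) * minSum x l.formPerm =
      ∑ rs ∈ antidiagonal m, ∑ p ∈ range (rs.1 + 1),
        (l.map x).getD p 1 * (l.map x).getD (p + rs.2 + 1) 1 *
          (minSum x (outerArc l p rs.2).formPerm * minSum x (innerArc l p rs.2).formPerm) := by
  set F : ℕ → ℕ → K := fun p q => (l.map x).getD p 1 * (l.map x).getD q 1 *
    (minSum x (outerArc l p (q - p - 1)).formPerm * minSum x (innerArc l p (q - p - 1)).formPerm)
    with hF
  have hcut (p s : ℕ) (h : p + s + 1 < l.length) :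
      swapWeight x (swap l[p] l[p + s + 1]) * minSum x (l.formPerm * swap l[p] l[p + s + 1]) =
        (l.map x).getD p 1 * (l.map x).getD (p + s + 1) 1 *
          (minSum x (outerArc l p s).formPerm * minSum x (innerArc l p s).formPerm) := by
    have hne : l[p] ≠ l[p + s + 1] := fun heq => by
      have := hl.getElem_inj_iff.1 heq
      omega
    rw [formPerm_mul_swap_getElem hl h, minSum_mul x (disjoint_formPerm_outerArc_innerArc hl p s),
      swapWeight_swap x hne, List.getD_eq_getElem _ _ (by simp; omega),
      List.getD_eq_getElem _ _ (by simpa using h), List.getElem_map, List.getElem_map]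
  have hlength : (swapLength l.formPerm : K) = m + 1 := by
    rw [swapLength_formPerm hl, hlen]; push_cast; rfl
  rw [← hlength, swapLength_mul_minSum, sum_cuttingSwaps_formPerm hl]
  have hpair (pq : Fin l.length × Fin l.length) (hpq : pq ∈ univ.filter fun pq => pq.1 < pq.2) :
      swapWeight x (swap l[pq.1] l[pq.2]) * minSum x (l.formPerm * swap l[pq.1] l[pq.2]) =
        F pq.1 pq.2 := by
    obtain ⟨⟨p, hp⟩, ⟨q, hq⟩⟩ := pq
    obtain ⟨s, rfl⟩ : ∃ s, q = p + s + 1 := ⟨q - p - 1, by simp at hpq; omega⟩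
    simpa [hF, add_assoc] using hcut p s hq
  rw [sum_congr rfl hpair, sum_lt_eq_sum_antidiagonal hlen F]
  simp [hF, add_assoc]

end Field

end Counting

/-! ### Abel's binomial identities -/

section Abel

open Polynomial

variable {K : Type*} [Field K]

/-- The polynomial `(X + n) ^ n / n!`. -/
noncomputable def abelPow (n : ℕ) : K[X] := C (n.factorial : K)⁻¹ * (X + C (n : K)) ^ n

/-- The Abel polynomial `X (X + n) ^ (n - 1) / n!`, equal to `1` for `n = 0`. -/
noncomputable def abelPoly : ℕ → K[X]
  | 0 => 1
  | n + 1 => C ((n + 1).factorial : K)⁻¹ * (X * (X + C ((n + 1 : ℕ) : K)) ^ n)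

lemma abelPoly_zero : (abelPoly 0 : K[X]) = 1 := rfl

lemma eval_abelPow (n : ℕ) (a : K) : (abelPow n).eval a = (a + n) ^ n / n.factorial := by
  simp [abelPow]; ring

lemma eval_abelPoly_succ (n : ℕ) (a : K) :
    (abelPoly (n + 1)).eval a = a * (a + (n + 1)) ^ n / (n + 1).factorial := by
  simp [abelPoly]; ring

lemma add_mul_eval_abelPoly (n : ℕ) (a : K) :
    (a + n) * (abelPoly n).eval a = a * (abelPow n).eval a := by
  cases n with
  | zero => simp [abelPoly, abelPow]
  | succ n => rw [eval_abelPoly_succ, eval_abelPow]; push_cast; ring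

lemma abelPoly_eq_sub_derivative (n : ℕ) :
    (abelPoly n : K[X]) = abelPow n - derivative (abelPow n) := by
  cases n with
  | zero => simp [abelPoly, abelPow]
  | succ n =>
    rw [abelPow, derivative_C_mul, derivative_X_add_C_pow, Nat.add_sub_cancel, abelPoly]
    ring

variable [CharZero K]

lemma derivative_abelPow_succ (n : ℕ) :
    derivative (abelPow (n + 1) : K[X]) = (abelPow n).comp (X + 1) := by
  have hcoeff : ((n + 1).factorial : K)⁻¹ * (n + 1 : ℕ) = (n.factorial : K)⁻¹ := by
    rw [Nat.factorial_succ]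
    push_cast
    field_simp
  simp only [abelPow, derivative_C_mul, derivative_X_add_C_pow, mul_comp, C_comp, pow_comp,
    add_comp, X_comp, Nat.add_sub_cancel, ← hcoeff, C_mul, mul_assoc]
  congr 3
  rw [Nat.cast_succ, C_add, C_1]
  ring

lemma derivative_abelPoly_succ (n : ℕ) :
    derivative (abelPoly (n + 1) : K[X]) = (abelPoly n).comp (X + 1) := by
  rw [abelPoly_eq_sub_derivative, abelPoly_eq_sub_derivative, derivative_sub,
    derivative_abelPow_succ, derivative_comp, sub_comp]
  simp

lemma eq_of_derivative_eq {F G : K[X]} (h : derivative F = derivative G)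
    (h0 : F.eval 0 = G.eval 0) : F = G := by
  have hconst : F - G = C ((F - G).eval 0) := by
    rw [← coeff_zero_eq_eval_zero]
    exact eq_C_of_derivative_eq_zero (by rw [derivative_sub, h, sub_self])
  rw [← sub_eq_zero, hconst, eval_sub, h0, sub_self, C_0]

/-- Both sides, as polynomials in `X`, have the same derivative by induction and agree at `0`. -/
lemma sum_C_eval_mul_abelPoly {F : ℕ → K[X]} (h0 : derivative (F 0) = 0)
    (hF : ∀ n, derivative (F (n + 1)) = (F n).comp (X + 1)) (M : ℕ) (a : K) :
    ∑ rs ∈ antidiagonal M, C ((F rs.1).eval a) * abelPoly rs.2 = (F M).comp (X + C a) := by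
  induction M with
  | zero =>
    obtain ⟨u, hu⟩ : ∃ u, F 0 = C u := ⟨_, eq_C_of_derivative_eq_zero h0⟩
    simp [hu, abelPoly_zero]
  | succ M ih =>
    rw [Nat.sum_antidiagonal_succ']
    refine eq_of_derivative_eq ?_ ?_
    · have hshift : ((F M).comp (X + C a)).comp (X + 1) = ((F M).comp (X + 1)).comp (X + C a) := by
        simp [comp_assoc, add_right_comm]
      simp [abelPoly_zero, derivative_comp, hF, ← hshift, ← ih, derivative_abelPoly_succ]
    · simp [abelPoly_zero, eval_finsetSum, eval_abelPoly_succ]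

/-- Abel's binomial identity, for a sequence `F` satisfying the differential equation of
`abelPoly`. -/
lemma sum_eval_mul_eval_abelPoly {F : ℕ → K[X]} (h0 : derivative (F 0) = 0)
    (hF : ∀ n, derivative (F (n + 1)) = (F n).comp (X + 1)) (M : ℕ) (a c : K) :
    ∑ rs ∈ antidiagonal M, (F rs.1).eval a * (abelPoly rs.2).eval c = (F M).eval (a + c) := by
  have h := congrArg (eval c) (sum_C_eval_mul_abelPoly h0 hF M a)
  simpa [eval_finsetSum, add_comm c a] using h

lemma sum_abelPoly_mul_abelPoly (M : ℕ) (a c : K) :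
    ∑ rs ∈ antidiagonal M, (abelPoly rs.1).eval a * (abelPoly rs.2).eval c =
      (abelPoly M).eval (a + c) :=
  sum_eval_mul_eval_abelPoly (by simp [abelPoly_zero]) derivative_abelPoly_succ M a c

lemma sum_add_mul_abelPoly_mul_abelPoly_one (M : ℕ) (a c : K) :
    ∑ rs ∈ antidiagonal M, (c + rs.1) * ((abelPoly rs.1).eval a * (abelPoly rs.2).eval 1) =
      (M + 1) * (abelPoly (M + 1)).eval a + (c - a) * (abelPoly M).eval (a + 1) := by
  have hpow := sum_eval_mul_eval_abelPoly (K := K) (by simp [abelPow]) derivative_abelPow_succ M a 1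
  have htop : a * (abelPow M).eval (a + 1) = (M + 1) * (abelPoly (M + 1)).eval a := by
    rw [eval_abelPow, eval_abelPoly_succ, Nat.factorial_succ]
    push_cast
    field_simp
    ring
  rw [← htop, ← hpow, ← sum_abelPoly_mul_abelPoly, mul_sum, mul_sum, ← sum_add_distrib]
  refine sum_congr rfl fun rs _ => ?_
  rw [← mul_assoc a, ← add_mul_eval_abelPoly]
  ring

end Abel

/-! ### Cycles with one or two weighted points -/

section Marks

open Polynomial

lemma outerArc_cons_replicate {β : Type*} (a b : β) {p r : ℕ} (s : ℕ) (h : p ≤ r) :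
    outerArc (a :: List.replicate (r + s + 1) b) p s = a :: List.replicate r b := by
  have hmin : min p (r + s + 1) + (r + s + 1 - (p + s + 1)) = r := by omega
  rw [outerArc, List.take_succ_cons, List.drop_succ_cons, List.take_replicate,
    List.drop_replicate, List.cons_append, List.replicate_append_replicate, hmin]

lemma innerArc_cons_replicate {β : Type*} (a b : β) {p r : ℕ} (s : ℕ) (h : p ≤ r) :
    innerArc (a :: List.replicate (r + s + 1) b) p s = b :: List.replicate s b := by
  have hmin : min (s + 1) (r + s + 1 - p) = s + 1 := by omega
  rw [innerArc, List.drop_succ_cons, List.drop_replicate, List.take_replicate, hmin,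
    List.replicate_succ]

lemma outerArc_cons_cons_replicate_succ {β : Type*} (a b c : β) {p r : ℕ} (s : ℕ) (h : p ≤ r) :
    outerArc (a :: b :: List.replicate (r + s + 1) c) (p + 1) s =
      a :: b :: List.replicate r c := by
  have := outerArc_cons_replicate b c s h
  simp_all [outerArc, add_right_comm _ 1]

lemma innerArc_cons_cons_replicate_succ {β : Type*} (a b c : β) {p r : ℕ} (s : ℕ) (h : p ≤ r) :
    innerArc (a :: b :: List.replicate (r + s + 1) c) (p + 1) s = c :: List.replicate s c := by
  rw [← innerArc_cons_replicate b c s h]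
  simp [innerArc]

lemma sum_range_getD_cons_replicate {R : Type*} [Semiring R] (a : R) (n r : ℕ) :
    ∑ p ∈ range (r + 1), (a :: List.replicate n 1).getD p 1 = a + r := by
  simp [sum_range_succ', add_comm]

variable {K : Type*} [Field K]

/-- The value of `(x - y) * minSum` on a cycle of length `n + 1 ≥ 2` with two adjacent points of
weights `x` and `y`, all others having weight `1`. -/
noncomputable def pairNumerator (n : ℕ) (x y : K) : K :=
  (x - y) * (abelPoly n).eval (x + y - 1) + x * (y - 1) * (abelPoly n).eval (x - 1) -
    y * (x - 1) * (abelPoly n).eval (y - 1)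

lemma pairNumerator_zero (x y : K) : pairNumerator 0 x y = 0 := by
  simp only [pairNumerator, abelPoly_zero, eval_one]
  ring

variable [CharZero K] {α : Type*} [Fintype α] [DecidableEq α]

lemma minSum_formPerm_eq_abelPoly {x : α → K} {l : List α} (hl : l.Nodup) {n : ℕ} {a : K}
    (hx : l.map x = a :: List.replicate n 1) : minSum x l.formPerm = (abelPoly n).eval a := by
  induction n using Nat.strong_induction_on generalizing l a with
  | _ n ih =>
  have hlen := congrArg List.length hx
  simp only [List.length_map, List.length_cons, List.length_replicate] at hlen
  cases n with
  | zero =>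
    rw [(List.formPerm_eq_one_iff l hl).2 (by omega), minSum_one, abelPoly_zero, eval_one]
  | succ m =>
    have hterm (rs : ℕ × ℕ) (hrs : rs ∈ antidiagonal m) (p : ℕ) (hp : p ∈ range (rs.1 + 1)) :
        minSum x (outerArc l p rs.2).formPerm * minSum x (innerArc l p rs.2).formPerm =
          (abelPoly rs.1).eval a * (abelPoly rs.2).eval 1 := by
      obtain ⟨r, s⟩ := rs
      obtain rfl : r + s = m := HasAntidiagonal.mem_antidiagonal.1 hrs
      have hpr : p ≤ r := mem_range_succ_iff.1 hp
      rw [ih r (by omega) (nodup_outerArc hl p s)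
          (by rw [map_outerArc, hx, outerArc_cons_replicate a 1 s hpr]),
        ih s (by omega) (nodup_innerArc hl p s)
          (by rw [map_innerArc, hx, innerArc_cons_replicate a 1 s hpr])]
    refine mul_left_cancel₀ (Nat.cast_add_one_ne_zero m : (m + 1 : K) ≠ 0) ?_
    calc (m + 1 : K) * minSum x l.formPerm
        = ∑ rs ∈ antidiagonal m, (a + rs.1) *
            ((abelPoly rs.1).eval a * (abelPoly rs.2).eval 1) := by
          rw [minSum_formPerm_rec x hl hlen]
          refine sum_congr rfl fun rs hrs => ?_
          rw [← sum_range_getD_cons_replicate a (m + 1), sum_mul]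
          refine sum_congr rfl fun p hp => ?_
          rw [hterm rs hrs p hp, hx]
          simp
      _ = (m + 1) * (abelPoly (m + 1)).eval a := by
          rw [sum_add_mul_abelPoly_mul_abelPoly_one, sub_self, zero_mul, add_zero]

lemma sum_add_mul_pairNumerator_mul_abelPoly (k : ℕ) (x y : K) :
    ∑ rs ∈ antidiagonal k, (y - 1 + rs.1) * (pairNumerator rs.1 x y * (abelPoly rs.2).eval 1) =
      (k + 1) * pairNumerator (k + 1) x y -
        (x - y) * (x * ((abelPoly k).eval (x + y) + (y - 1) * (abelPoly k).eval x)) := by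
  have hsum (u : K) := sum_add_mul_abelPoly_mul_abelPoly_one k u (y - 1)
  calc _ = (x - y) * ∑ rs ∈ antidiagonal k, (y - 1 + rs.1) *
              ((abelPoly rs.1).eval (x + y - 1) * (abelPoly rs.2).eval 1) +
            x * (y - 1) * ∑ rs ∈ antidiagonal k, (y - 1 + rs.1) *
              ((abelPoly rs.1).eval (x - 1) * (abelPoly rs.2).eval 1) -
            y * (x - 1) * ∑ rs ∈ antidiagonal k, (y - 1 + rs.1) *
              ((abelPoly rs.1).eval (y - 1) * (abelPoly rs.2).eval 1) := by
        simp only [mul_sum, ← sum_add_distrib, ← sum_sub_distrib]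
        exact sum_congr rfl fun rs _ => by rw [pairNumerator]; ring
    _ = _ := by
        rw [hsum, hsum, hsum, pairNumerator]
        simp only [sub_add_cancel]
        ring

lemma sum_getD_mul_abelPoly_mul_abelPoly (k : ℕ) (x y : K) :
    ∑ rs ∈ antidiagonal k, (y :: List.replicate k 1).getD rs.2 1 *
        ((abelPoly rs.1).eval x * (abelPoly rs.2).eval y) =
      (abelPoly k).eval (x + y) + (y - 1) * (abelPoly k).eval x := by
  have hweight (s : ℕ) : (y :: List.replicate k 1).getD s 1 = 1 + if s = 0 then y - 1 else 0 := by
    cases s <;> simp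
  simp only [hweight, add_mul, one_mul, sum_add_distrib, sum_abelPoly_mul_abelPoly, ite_mul,
    zero_mul]
  congr 1
  rw [sum_eq_single (k, 0)]
  · simp [abelPoly_zero]
  · rintro ⟨r, s⟩ hrs hne
    grind [HasAntidiagonal.mem_antidiagonal]
  · simp

lemma minSum_outerArc_zero_mul_minSum_innerArc_zero {x : α → K} {l : List α} (hl : l.Nodup)
    {r s : ℕ} {a b : K} (hx : l.map x = a :: b :: List.replicate (r + s) 1) :
    minSum x (outerArc l 0 s).formPerm * minSum x (innerArc l 0 s).formPerm =
      (abelPoly r).eval a * (abelPoly s).eval b := by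
  rw [minSum_formPerm_eq_abelPoly (nodup_outerArc hl 0 s) (n := r) (a := a)
      (by rw [map_outerArc, hx]; simp [outerArc]),
    minSum_formPerm_eq_abelPoly (nodup_innerArc hl 0 s) (n := s) (a := b)
      (by rw [map_innerArc, hx]; simp [innerArc])]

/-- Attaching the first point to another one (`p = 0`) separates the two weights; every other
transposition cuts out a cycle of points of weight `1`. -/
lemma sub_mul_minSum_formPerm_eq_pairNumerator {x : α → K} {l : List α} (hl : l.Nodup) {k : ℕ}
    {a b : K} (hx : l.map x = a :: b :: List.replicate k 1) :
    (a - b) * minSum x l.formPerm = pairNumerator (k + 1) a b := by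
  induction k using Nat.strong_induction_on generalizing l with
  | _ k ih =>
  have hlen : l.length = k + 2 := by simpa using congrArg List.length hx
  have hsum (r s : ℕ) (hrs : r + s = k) :
      (a - b) * ∑ p ∈ range r, (l.map x).getD (p + 1) 1 * (l.map x).getD (p + 1 + s + 1) 1 *
        (minSum x (outerArc l (p + 1) s).formPerm * minSum x (innerArc l (p + 1) s).formPerm) =
        (b - 1 + r) * (pairNumerator r a b * (abelPoly s).eval 1) := by
    cases r with
    | zero => simp [pairNumerator_zero]
    | succ r =>
      have hweight := sum_range_getD_cons_replicate b k r
      rw [mul_sum, show b - 1 + (r + 1 : ℕ) = b + r by push_cast; ring, ← hweight, sum_mul]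
      refine sum_congr rfl fun p hp => ?_
      have hpr : p ≤ r := mem_range_succ_iff.1 hp
      obtain rfl : r + s + 1 = k := by omega
      rw [mul_left_comm, ← mul_assoc (a - b), ih r (by omega) (nodup_outerArc hl _ s)
          (by rw [map_outerArc, hx, outerArc_cons_cons_replicate_succ a b 1 s hpr]),
        minSum_formPerm_eq_abelPoly (nodup_innerArc hl _ s)
          (by rw [map_innerArc, hx, innerArc_cons_cons_replicate_succ a b 1 s hpr]), hx]
      simp [add_right_comm]
  refine mul_left_cancel₀ (Nat.cast_add_one_ne_zero k : (k + 1 : K) ≠ 0) ?_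
  calc (k + 1 : K) * ((a - b) * minSum x l.formPerm)
      = ∑ rs ∈ antidiagonal k, ((a - b) * (a * ((b :: List.replicate k 1).getD rs.2 1 *
            ((abelPoly rs.1).eval a * (abelPoly rs.2).eval b))) +
          (b - 1 + rs.1) * (pairNumerator rs.1 a b * (abelPoly rs.2).eval 1)) := by
        rw [mul_left_comm, minSum_formPerm_rec x hl hlen, mul_sum]
        refine sum_congr rfl fun ⟨r, s⟩ hrs => ?_
        obtain rfl : r + s = k := HasAntidiagonal.mem_antidiagonal.1 hrs
        rw [sum_range_succ', mul_add, hsum r s rfl, add_comm,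
          minSum_outerArc_zero_mul_minSum_innerArc_zero hl hx, hx]
        simp [mul_assoc]
    _ = (k + 1) * pairNumerator (k + 1) a b := by
        rw [sum_add_distrib, sum_add_mul_pairNumerator_mul_abelPoly, ← mul_sum, ← mul_sum,
          sum_getD_mul_abelPoly_mul_abelPoly]
        ring

end Marks

/-! ### Coefficients of the generating polynomial -/

section BivariateCoefficients

open MvPolynomial

variable {R : Type*} [CommRing R]

lemma coeff_X_pow_mul_X_pow (d : Fin 2 →₀ ℕ) (a b : ℕ) :
    coeff d (X 0 ^ a * X 1 ^ b : MvPolynomial (Fin 2) R) = if d 0 = a ∧ d 1 = b then 1 else 0 := by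
  rw [X_pow_eq_monomial, X_pow_eq_monomial, monomial_mul, coeff_monomial, one_mul]
  refine if_congr ?_ rfl rfl
  simp [Finsupp.ext_iff, Fin.forall_fin_two, eq_comm]

/-- The quotient of `X 0 ^ n - X 1 ^ n` by `X 0 - X 1`. -/
noncomputable def geomPoly (R : Type*) [CommRing R] (n : ℕ) : MvPolynomial (Fin 2) R :=
  ∑ i ∈ range n, X 0 ^ i * X 1 ^ (n - 1 - i)

lemma sub_mul_geomPoly (n : ℕ) : (X 0 - X 1) * geomPoly R n = X 0 ^ n - X 1 ^ n :=
  (Commute.all _ _).mul_geom_sum₂ n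

lemma coeff_geomPoly (d : Fin 2 →₀ ℕ) (n : ℕ) :
    coeff d (geomPoly R n) = if n = d 0 + d 1 + 1 then 1 else 0 := by
  simp only [geomPoly, coeff_sum, coeff_X_pow_mul_X_pow]
  split_ifs with h
  · subst h
    rw [sum_eq_single (d 0) (by simp +contextual [eq_comm]) (by simp)]
    simp
  · exact sum_eq_zero fun i hi => if_neg (by have := mem_range.1 hi; omega)

lemma coeff_add_pow_add_mul_geomPoly_sub_geomPoly (d : Fin 2 →₀ ℕ) (k : ℕ) :
    coeff (Finsupp.single 0 1 + (Finsupp.single 1 1 + d))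
      ((X 0 + X 1) ^ k + X 0 * X 1 * geomPoly R k - geomPoly R (k + 1)) =
      (if k = d 0 + d 1 + 2 then ((d 0 + d 1 + 2).choose (d 0 + 1) - 1 : R) else 0) +
        if k = d 0 + d 1 + 1 then 1 else 0 := by
  have hd₀ : (Finsupp.single 0 1 + (Finsupp.single 1 1 + d) : Fin 2 →₀ ℕ) 0 = d 0 + 1 := by
    simp [add_comm]
  have hd₁ : (Finsupp.single 0 1 + (Finsupp.single 1 1 + d) : Fin 2 →₀ ℕ) 1 = d 1 + 1 := by
    simp [add_comm]
  have hk : d 0 + 1 + (d 1 + 1) = k ↔ k = d 0 + d 1 + 2 := by omega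
  rw [coeff_sub, coeff_add, coeff_add_pow, coeff_geomPoly, hd₀, hd₁, mul_assoc, coeff_X_mul,
    coeff_X_mul, coeff_geomPoly]
  simp only [HasAntidiagonal.mem_antidiagonal, eq_comm (a := k + 1), add_left_inj, hk]
  split_ifs <;> simp_all

lemma coeff_eq_of_sub_mul_eq [IsDomain R] {S : MvPolynomial (Fin 2) R} {B : Polynomial R}
    (hS : (X 0 - X 1) * S = (X 0 - X 1) * Polynomial.aeval (X 0 + X 1) B +
      X 0 * (X 1 - 1) * Polynomial.aeval (X 0) B - X 1 * (X 0 - 1) * Polynomial.aeval (X 1) B)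
    (d : Fin 2 →₀ ℕ) :
    coeff (Finsupp.single 0 1 + (Finsupp.single 1 1 + d)) S =
      B.coeff (d 0 + d 1 + 2) * ((d 0 + d 1 + 2).choose (d 0 + 1) - 1) +
        B.coeff (d 0 + d 1 + 1) := by
  have hne : (X 0 - X 1 : MvPolynomial (Fin 2) R) ≠ 0 :=
    sub_ne_zero.2 fun h => zero_ne_one (X_injective h)
  have hSsum : S = B.sum fun k c =>
      C c * ((X 0 + X 1) ^ k + X 0 * X 1 * geomPoly R k - geomPoly R (k + 1)) := by
    refine mul_left_cancel₀ hne ?_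
    simp only [hS, Polynomial.aeval_def, Polynomial.eval₂_eq_sum, Polynomial.sum_def, mul_sum,
      ← sum_add_distrib, ← sum_sub_distrib, algebraMap_eq]
    refine sum_congr rfl fun k _ => ?_
    linear_combination
      C (B.coeff k) * (sub_mul_geomPoly (R := R) (k + 1) - X 0 * X 1 * sub_mul_geomPoly (R := R) k)
  rw [hSsum, Polynomial.sum_def, coeff_sum]
  simp only [coeff_C_mul, coeff_add_pow_add_mul_geomPoly_sub_geomPoly, mul_add, sum_add_distrib,
    mul_ite, mul_zero, sum_ite_eq', mul_one]
  split_ifs <;> simp_all [Polynomial.mem_support_iff]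

end BivariateCoefficients

section GeneratingPolynomial

open Polynomial

lemma finRotate_eq_formPerm (n : ℕ) : finRotate (n + 2) = (List.finRange (n + 2)).formPerm := by
  ext v : 1
  have h := List.formPerm_apply_getElem (List.finRange (n + 2)) (List.nodup_finRange _) v (by simp)
  simp only [List.getElem_finRange, List.length_finRange, Fin.cast_mk, Fin.eta] at h
  rw [h]
  ext
  simp [Fin.val_add]

lemma sub_mul_sum_factorizations_finRotate {K : Type*} [Field K] [CharZero K] (n : ℕ) (a b : K) :
    (a - b) * ∑ f ∈ factorizations (n + 1) (finRotate (n + 2)), a ^ Tcount f 0 * b ^ Tcount f 1 =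
      (n + 1).factorial * pairNumerator (n + 1) a b := by
  let x : Fin (n + 2) → K := Fin.cons a (Fin.cons b fun _ => 1)
  have hx : (List.finRange (n + 2)).map x = a :: b :: List.replicate n 1 := by
    simp [x, List.finRange_succ, Function.comp_def]
  have hlength : swapLength (finRotate (n + 2)) = n + 1 := by
    simp [finRotate_eq_formPerm, swapLength_formPerm (List.nodup_finRange _)]
  have hsum : ∑ f ∈ factorizations (n + 1) (finRotate (n + 2)), a ^ Tcount f 0 * b ^ Tcount f 1 =
      (n + 1).factorial * minSum x (finRotate (n + 2)) := by
    rw [minSum, hlength, mul_div_cancel₀ _ (Nat.cast_ne_zero.2 (Nat.factorial_ne_zero _)), factSum]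
    refine sum_congr rfl fun f _ => ?_
    rw [prod_swapWeight, Fin.prod_univ_succ, Fin.prod_univ_succ, Fin.succ_zero_eq_one]
    simp [x, Tcount]
  rw [hsum, mul_left_comm, finRotate_eq_formPerm,
    sub_mul_minSum_formPerm_eq_pairNumerator (List.nodup_finRange _) hx]

/-- The polynomial `(z - 1) (z + n) ^ n`, which is `(n + 1)!` times the Abel polynomial of degree
`n + 1` at `z - 1`. -/
noncomputable def shiftedAbelPoly (n : ℕ) : ℚ[X] := (X - 1) * (X + C (n : ℚ)) ^ n

lemma eval_shiftedAbelPoly (n : ℕ) (z : ℚ) :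
    (shiftedAbelPoly n).eval z = (n + 1).factorial * (abelPoly (n + 1)).eval (z - 1) := by
  rw [eval_abelPoly_succ, mul_div_cancel₀ _ (Nat.cast_ne_zero.2 (Nat.factorial_ne_zero _))]
  simp [shiftedAbelPoly]

lemma mul_coeff_shiftedAbelPoly (k e : ℕ) :
    ((k + e : ℕ) : ℚ) * (shiftedAbelPoly (k + e)).coeff (k + 1) =
      (k + e + 1).factorial / (e.factorial * (k + 1).factorial) * k * (k + e) ^ e := by
  have hcoeff : (shiftedAbelPoly (k + e)).coeff (k + 1) =
      (k + e : ℚ) ^ e * (k + e).choose k - (k + e : ℚ) ^ (e - 1) * (k + e).choose (k + 1) := by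
    rw [shiftedAbelPoly, sub_mul, one_mul, coeff_sub, coeff_X_mul, coeff_X_add_C_pow,
      coeff_X_add_C_pow, Nat.add_sub_cancel_left, Nat.add_sub_add_left]
    push_cast
    rfl
  have hchoose : ((k + e).choose (k + 1) : ℚ) * (k + 1) = (k + e).choose k * e := by
    have := Nat.choose_succ_right_eq (k + e) k
    rw [Nat.add_sub_cancel_left] at this
    exact_mod_cast this
  have hpow : (k + e : ℚ) * ((k + e : ℚ) ^ (e - 1) * (k + e).choose (k + 1)) =
      (k + e : ℚ) ^ e * (k + e).choose (k + 1) := by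
    cases e with
    | zero => simp
    | succ e => rw [Nat.add_sub_cancel]; ring
  have hchoose' : ((k + e).choose k : ℚ) = (k + e).factorial / (k.factorial * e.factorial) :=
    Nat.cast_add_choose ..
  rw [hcoeff]
  push_cast
  rw [mul_sub, hpow, eq_div_iff (by positivity) |>.2 hchoose, hchoose', Nat.factorial_succ,
    Nat.factorial_succ]
  push_cast
  field_simp
  ring

/-- The generating polynomial of the pair `(T_1, T_2)`. -/
noncomputable def countPoly (n : ℕ) : MvPolynomial (Fin 2) ℚ :=
  ∑ f ∈ factorizations (n + 1) (finRotate (n + 2)),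
    MvPolynomial.X 0 ^ Tcount f 0 * MvPolynomial.X 1 ^ Tcount f 1

lemma coeff_countPoly (n : ℕ) (d : Fin 2 →₀ ℕ) :
    (countPoly n).coeff d = Nat.card {τ : Fin (n + 1) → Perm (Fin (n + 2)) //
      IsMinFact τ ∧ Tcount τ 0 = d 0 ∧ Tcount τ 1 = d 1} := by
  classical
  simp only [countPoly, MvPolynomial.coeff_sum, coeff_X_pow_mul_X_pow]
  rw [Nat.card_eq_fintype_card, Fintype.card_subtype, ← sum_filter, sum_const, nsmul_one]
  congr 2
  ext f
  simp [mem_factorizations, IsMinFact, eq_comm]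

lemma card_minFact_eq_coeff_shiftedAbelPoly (n i j : ℕ) :
    (Nat.card {τ : Fin (n + 1) → Perm (Fin (n + 2)) //
        IsMinFact τ ∧ Tcount τ 0 = i + 1 ∧ Tcount τ 1 = j + 1} : ℚ) =
      (shiftedAbelPoly n).coeff (i + j + 2) * ((i + j + 2).choose (i + 1) - 1) +
        (shiftedAbelPoly n).coeff (i + j + 1) := by
  have haeval (z : Fin 2 → ℚ) (p : MvPolynomial (Fin 2) ℚ) :
      MvPolynomial.eval z (aeval p (shiftedAbelPoly n)) =
        (shiftedAbelPoly n).eval (MvPolynomial.eval z p) := by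
    simpa [MvPolynomial.coe_aeval_eq_eval] using
      (aeval_algHom_apply (MvPolynomial.aeval z) p _).symm
  have hcoeff := coeff_eq_of_sub_mul_eq (S := countPoly n) (B := shiftedAbelPoly n)
    (MvPolynomial.funext fun z => by
      simp only [countPoly, map_mul, map_sub, map_sum, map_add, map_pow, map_one,
        MvPolynomial.eval_X, sub_mul_sum_factorizations_finRotate, haeval, eval_shiftedAbelPoly,
        pairNumerator]
      ring)
    (Finsupp.single 0 i + Finsupp.single 1 j)
  rw [coeff_countPoly] at hcoeff
  simpa [add_comm 1] using hcoeff

end GeneratingPolynomial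

end MinimalFactorization

/-- Theorem 1.1 of the paper: the joint law of `(T_1, T_2)` on uniform minimal
factorizations of the `(n+1)`-cycle.  Vertex `1` is `(0 : Fin (n+1))` and vertex `2`
is `(1 : Fin (n+1))`. -/
theorem stmt_0 (i j n : ℕ) (hi : 1 ≤ i) (hj : 1 ≤ j) (hn : i + j ≤ n) :
    ((n : ℚ) - 1) *
      (Nat.card {τ : Fin n → Equiv.Perm (Fin (n + 1)) //
        IsMinFact τ ∧ Tcount τ 0 = i ∧ Tcount τ 1 = j} : ℚ) =
    ((n.factorial : ℚ) / ((n - i - j).factorial : ℚ)) * ((n : ℚ) - 1) ^ (n - i - j) *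
      ( ((i : ℚ) + (j : ℚ) - 2) * ((n : ℚ) - 1) /
          ((((i + j - 1).factorial : ℚ)) * ((n : ℚ) - (i : ℚ) - (j : ℚ) + 1))
        + ((i : ℚ) + (j : ℚ) - 1) / ((i.factorial : ℚ) * (j.factorial : ℚ))
        - ((i : ℚ) + (j : ℚ) - 1) / (((i + j).factorial : ℚ)) ) := by
  obtain ⟨i, rfl⟩ := Nat.exists_eq_add_of_le' hi
  obtain ⟨j, rfl⟩ := Nat.exists_eq_add_of_le' hj
  obtain ⟨e, rfl⟩ : ∃ e, n = i + j + 1 + e + 1 := ⟨n - (i + j + 2), by omega⟩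
  have hcoeff := MinimalFactorization.mul_coeff_shiftedAbelPoly (i + j + 1) e
  have hcoeff' := MinimalFactorization.mul_coeff_shiftedAbelPoly (i + j) (e + 1)
  rw [show i + j + (e + 1) = i + j + 1 + e by ring] at hcoeff'
  have hchoose : ((i + j + 2).choose (i + 1) : ℚ) =
      (i + j + 2).factorial / ((i + 1).factorial * (j + 1).factorial) := by
    rw [show i + j + 2 = i + 1 + (j + 1) by ring, Nat.cast_add_choose]
  have hden : ((i + j + 1 + e + 1 : ℕ) - (i + 1 : ℕ) - (j + 1 : ℕ) + 1 : ℚ) = e + 1 := by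
    push_cast; ring
  rw [show i + j + 1 + e + 1 - (i + 1) - (j + 1) = e by omega,
    show i + 1 + (j + 1) - 1 = i + j + 1 by omega, show i + 1 + (j + 1) = i + j + 2 by ring, hden,
    MinimalFactorization.card_minFact_eq_coeff_shiftedAbelPoly, hchoose, Nat.cast_succ (_ + e),
    add_sub_cancel_right, mul_add, ← mul_assoc, hcoeff, hcoeff', Nat.factorial_succ e]
  push_cast
  field_simp
  ring
end

section
/- Let i, j ≥ 1 and n ≥ i + j be integers. Let N be the number of Cayley trees t on {1, …, n+1} with deg_1(t) = i and deg'_2(t) = j. Then, as an identity in ℚ, (n−1)·N = (n!/(n−i−j)!)·(n−1)^{n−i−j}·[ (i+j−2)(n−1)/((i+j−1)!·(n−i−j+1)) + (i+j−1)/(i!·j!) − (i+j−1)/(i+j)! ]. -/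
/-!
A tree on `{0, …, n}` is the same thing as its parent function `p` towards the root `0`. Along the
greedy path labels increase, so the path only moves from a vertex to one of its children.

Let `v ≠ 0` be the last vertex of the path. Cutting the edge above `v`, that is, replacing `p v` by
`v`, yields a forest `q` with roots `0` and `v`. The lost value `p v` can be read off from `q`: it
is the end of the greedy path from `0` in which only labels below `v` are used. Hence trees whose
path ends at `v` correspond bijectively to forests rooted at `0` and `v` in which all children of
`v` are smaller than `v`.

Let `A` and `B` be the sets of children of `0` and `v` in `q`. Then `deg'_2 = |B| + 1`, whereas
`deg_1 = |A| + 1` if all of `A` lies above `v` (the path then is the edge from `0` to `v`), and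
`deg_1 = |A|` otherwise. For given `A` and `B` with `r = |A| + |B|`, removing `0` and `v` leaves a
forest on `n - 1` vertices with `r` prescribed roots, and there are `r (n - 1)^(n - 2 - r)` of
those, as one sees by splitting a forest into its first layer and the rest.

It remains to count the triples `(v, A, B)`. With `A` above `v`, `|A| = i - 1` and `|B| = j - 1`
they number `C(n, i + j - 1)`; with `A` not above `v`, `|A| = i` and `|B| = j - 1` they number
`C(n, j) C(n - j, i) - C(n, i + j)`. The claimed identity is the sum of these two contributions.
-/

/- The next vertex on the greedy increasing path: the smallest neighbour of `v`
with a larger label, or `v` itself if there is none. -/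
open Classical in
noncomputable def greedyNext {m : ℕ} (t : SimpleGraph (Fin m)) (v : Fin m) : Fin m :=
  if h : (Finset.univ.filter fun w => t.Adj v w ∧ v < w).Nonempty
  then (Finset.univ.filter fun w => t.Adj v w ∧ v < w).min' h
  else v

/- The last vertex `v_M` of the greedy increasing path started at `v`
(after `m` steps the path has stabilised). -/
noncomputable def greedyLast {m : ℕ} (t : SimpleGraph (Fin m)) (v : Fin m) : Fin m :=
  (greedyNext t)^[m] v

/- The number `M` of edges of the greedy increasing path started at `v`. -/
open Classical in
noncomputable def greedyLenFrom {m : ℕ} (t : SimpleGraph (Fin m)) (v : Fin m) : ℕ :=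
  ((Finset.range m).filter fun k => (greedyNext t)^[k + 1] v ≠ (greedyNext t)^[k] v).card

/- `deg_1`: the degree of the vertex labelled `1` (index `0`). -/
noncomputable def deg1 {m : ℕ} (t : SimpleGraph (Fin m)) : ℕ :=
  if h : 0 < m then (t.neighborSet ⟨0, h⟩).ncard else 0

/- `deg_2`: the degree of the vertex labelled `2` (index `1`). -/
noncomputable def deg2 {m : ℕ} (t : SimpleGraph (Fin m)) : ℕ :=
  if h : 1 < m then (t.neighborSet ⟨1, h⟩).ncard else 0

/- `|L_1(t)|`: the length of the greedy increasing path started at vertex `1`. -/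
noncomputable def L1len {m : ℕ} (t : SimpleGraph (Fin m)) : ℕ :=
  if h : 0 < m then greedyLenFrom t ⟨0, h⟩ else 0

/- `deg'_2`: the degree of the last vertex of the greedy increasing path started at `1`. -/
noncomputable def deg2' {m : ℕ} (t : SimpleGraph (Fin m)) : ℕ :=
  if h : 0 < m then (t.neighborSet (greedyLast t ⟨0, h⟩)).ncard else 0

open Finset

section RootedForests

variable {V : Type*} [DecidableEq V] {U A B : Finset V} {p : V → V} {x : V}

/-- `p` is the parent function of a forest on the vertex set `U` with root set `A`. Everything
outside `U \ A` is fixed by `p`, and acyclicity is expressed by a height function that decreases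
strictly from every non-root to its parent. -/
structure IsRootedForest (U A : Finset V) (p : V → V) : Prop where
  apply_eq_self : ∀ x ∉ U \ A, p x = x
  apply_mem : ∀ x ∈ U \ A, p x ∈ U
  exists_height : ∃ h : V → ℕ, ∀ x ∈ U \ A, h (p x) < h x

namespace IsRootedForest

lemma apply_root (hp : IsRootedForest U A p) (hx : x ∈ A) : p x = x :=
  hp.apply_eq_self x fun h => (mem_sdiff.1 h).2 hx

lemma apply_ne_self (hp : IsRootedForest U A p) (hx : x ∈ U \ A) : p x ≠ x := by
  obtain ⟨h, hh⟩ := hp.exists_height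
  exact fun he => (hh x hx).ne (congrArg h he)

lemma apply_apply_ne_self (hp : IsRootedForest U A p) (hx : x ∈ U \ A) : p (p x) ≠ x := by
  obtain ⟨h, hh⟩ := hp.exists_height
  intro he
  by_cases hpx : p x ∈ U \ A
  · have hlt := (hh _ hpx).trans (hh x hx)
    rw [he] at hlt
    exact hlt.false
  · exact hp.apply_ne_self hx ((hp.apply_eq_self _ hpx).symm.trans he)

lemma induction {P : V → Prop} (hp : IsRootedForest U A p) (fixed : ∀ x ∉ U \ A, P x)
    (step : ∀ x ∈ U \ A, P (p x) → P x) (x : V) : P x := by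
  obtain ⟨h, hh⟩ := hp.exists_height
  induction hn : h x using Nat.strong_induction_on generalizing x with
  | h n ih =>
    subst hn
    by_cases hx : x ∈ U \ A
    · exact step x hx (ih _ (hh x hx) (p x) rfl)
    · exact fixed x hx

lemma detach_roots (hp : IsRootedForest U A p) (hpB : ∀ x ∈ U \ A, x ∉ B → p x ∉ A) :
    IsRootedForest (U \ A) B (B.piecewise id p) where
  apply_eq_self x hx := by
    by_cases hxB : x ∈ B
    · simp [hxB]
    · simpa [hxB] using hp.apply_eq_self x fun h => hx (mem_sdiff.2 ⟨h, hxB⟩)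
  apply_mem x hx := by
    obtain ⟨hxU, hxB⟩ := mem_sdiff.1 hx
    simpa [hxB, hpB x hxU hxB] using hp.apply_mem x hxU
  exists_height := by
    obtain ⟨h, hh⟩ := hp.exists_height
    refine ⟨h, fun x hx => ?_⟩
    obtain ⟨hxU, hxB⟩ := mem_sdiff.1 hx
    simpa [hxB] using hh x hxU

lemma attach_roots (hp : IsRootedForest (U \ A) B p) (hA : A ⊆ U) (hB : B ⊆ U \ A) {g : V → V}
    (hg : ∀ x ∈ B, g x ∈ A) : IsRootedForest U A (B.piecewise g p) where
  apply_eq_self x hx := by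
    have hxB : x ∉ B := fun h => hx (hB h)
    simpa [hxB] using hp.apply_eq_self x fun h => hx (mem_sdiff.1 h).1
  apply_mem x hx := by
    by_cases hxB : x ∈ B
    · simpa [hxB] using hA (hg x hxB)
    · simpa [hxB] using (mem_sdiff.1 (hp.apply_mem x (mem_sdiff.2 ⟨hx, hxB⟩))).1
  exists_height := by
    obtain ⟨h, hh⟩ := hp.exists_height
    refine ⟨fun x => if x ∈ A then 0 else h x + 1, fun x hx => ?_⟩
    have hxA := (mem_sdiff.1 hx).2
    by_cases hxB : x ∈ B
    · simp [hxB, hxA, hg x hxB]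
    · have hxB' := mem_sdiff.2 ⟨hx, hxB⟩
      have hpxA := (mem_sdiff.1 (hp.apply_mem x hxB')).2
      simpa [hxB, hxA, hpxA] using hh x hxB'

end IsRootedForest

section Counting

variable [Fintype V]

open Classical in
/-- The finite set of rooted forests in the sense of `IsRootedForest U A`. -/
noncomputable def rootedForests (U A : Finset V) : Finset (V → V) :=
  {p | IsRootedForest U A p}

lemma mem_rootedForests : p ∈ rootedForests U A ↔ IsRootedForest U A p := by
  simp [rootedForests]

lemma rootedForests_self (U : Finset V) : rootedForests U U = {id} := by
  ext p
  rw [mem_rootedForests, mem_singleton]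
  constructor
  · exact fun hp => funext fun x => hp.apply_eq_self x (by simp)
  · rintro rfl
    exact ⟨by simp, by simp, fun _ => 0, by simp⟩

lemma rootedForests_empty (hU : U.Nonempty) : rootedForests U ∅ = ∅ := by
  refine eq_empty_of_forall_notMem fun p hp => ?_
  rw [mem_rootedForests] at hp
  obtain ⟨h, hh⟩ := hp.exists_height
  obtain ⟨x, hx, hmin⟩ := exists_min_image U h hU
  exact (hh x (by simpa using hx)).not_ge (hmin _ (hp.apply_mem x (by simpa using hx)))

lemma card_filter_firstLayer_parents (hA : A ⊆ U) (hB : B ⊆ U \ A) {g : V → V}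
    (hg : ∀ x ∈ B, g x ∈ A) :
    #{p ∈ rootedForests U A | ∀ x ∈ U \ A, if x ∈ B then p x = g x else p x ∉ A} =
      #(rootedForests (U \ A) B) := by
  refine card_nbij' (fun p => B.piecewise id p) (fun q => B.piecewise g q) ?_ ?_ ?_ ?_
  · intro p hp
    simp only [coe_filter, mem_rootedForests, Set.mem_ofPred_eq, mem_coe] at hp ⊢
    exact hp.1.detach_roots fun x hx hxB => by simpa [hxB] using hp.2 x hx
  · intro q hq
    simp only [coe_filter, mem_rootedForests, Set.mem_ofPred_eq, mem_coe] at hq ⊢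
    refine ⟨hq.attach_roots hA hB hg, fun x hx => ?_⟩
    by_cases hxB : x ∈ B
    · simp [hxB]
    · simpa [hxB] using (mem_sdiff.1 (hq.apply_mem x (mem_sdiff.2 ⟨hx, hxB⟩))).2
  · intro p hp
    simp only [coe_filter, mem_rootedForests, Set.mem_ofPred_eq] at hp
    ext x
    by_cases hxB : x ∈ B
    · simpa [hxB, eq_comm] using hp.2 x (hB hxB)
    · simp [hxB]
  · intro q hq
    rw [mem_coe, mem_rootedForests] at hq
    ext x
    by_cases hxB : x ∈ B
    · simp [hxB, hq.apply_root hxB]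
    · simp [hxB]

/-- Sort the forests with first layer `B` by the restriction of their parent function to `B`. -/
lemma card_filter_firstLayer (hA : A ⊆ U) (hB : B ⊆ U \ A) :
    #{p ∈ rootedForests U A | {x ∈ U \ A | p x ∈ A} = B} =
      #A ^ #B * #(rootedForests (U \ A) B) := by
  set T : Finset (V → V) := Fintype.piFinset fun x => if x ∈ B then A else {x} with hT
  have hT_card : #T = #A ^ #B := by
    simp [hT, Fintype.card_piFinset, apply_ite card]
  have hmaps : ∀ p ∈ {p ∈ rootedForests U A | {x ∈ U \ A | p x ∈ A} = B},
      B.piecewise p id ∈ T := by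
    intro p hp
    obtain ⟨-, rfl⟩ := mem_filter.1 hp
    refine Fintype.mem_piFinset.2 fun x => ?_
    split_ifs with hx
    · simpa [hx] using (mem_filter.1 hx).2
    · simp [hx]
  rw [card_eq_sum_card_fiberwise hmaps, ← hT_card, ← smul_eq_mul]
  refine sum_const_nat fun g hg => ?_
  have hgT : ∀ x, g x ∈ if x ∈ B then A else {x} := Fintype.mem_piFinset.1 hg
  rw [← card_filter_firstLayer_parents hA hB fun x hx => by simpa [hx] using hgT x, filter_filter]
  congr 1
  refine filter_congr fun p _ => ?_
  simp only [Finset.ext_iff, mem_filter, funext_iff]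
  constructor
  · rintro ⟨hlayer, hparent⟩ x hx
    have := hparent x
    grind [Finset.piecewise]
  · intro h
    refine ⟨fun x => ?_, fun x => ?_⟩ <;> have := hgT x <;> grind [Finset.piecewise]

lemma card_rootedForests_eq_sum (hA : A ⊆ U) :
    #(rootedForests U A) = ∑ B ∈ (U \ A).powerset, #A ^ #B * #(rootedForests (U \ A) B) := by
  rw [card_eq_sum_card_fiberwise (f := fun p => {x ∈ U \ A | p x ∈ A}) (t := (U \ A).powerset)
    fun p _ => mem_powerset.2 (filter_subset _ _)]
  exact sum_congr rfl fun B hB => card_filter_firstLayer hA (mem_powerset.1 hB)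

lemma sum_choose_mul_mul_pow_mul_pow {R : Type*} [CommSemiring R] (x y : R) (n : ℕ) :
    ∑ k ∈ range (n + 2), ((n + 1).choose k * k : ℕ) * (x ^ k * y ^ (n + 1 - k)) =
      (n + 1) * x * (x + y) ^ n := by
  rw [sum_range_succ', add_pow, mul_sum]
  simp only [mul_zero, Nat.cast_zero, zero_mul, add_zero]
  refine sum_congr rfl fun k _ => ?_
  rw [← Nat.add_one_mul_choose_eq, Nat.add_sub_add_right]
  push_cast
  ring

/-- Cayley's formula for rooted forests. The factor `#U` stands on the left because the exponent
`#U - #A - 1` would be truncated when `A = U`. -/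
theorem card_mul_card_rootedForests (hA : A ⊆ U) :
    #U * #(rootedForests U A) = #A * #U ^ (#U - #A) := by
  induction U using Finset.strongInduction generalizing A with
  | H U ih =>
    obtain rfl | hAne := A.eq_empty_or_nonempty
    · obtain rfl | hU := U.eq_empty_or_nonempty
      · simp
      · simp [rootedForests_empty hU]
    obtain rfl | hssub := hA.eq_or_ssubset
    · simp [rootedForests_self]
    obtain ⟨k, hk⟩ : ∃ k, #(U \ A) = k + 1 :=
      Nat.exists_eq_add_one.2 (card_pos.2 (sdiff_nonempty.2 hssub.not_subset))
    have hU_card : #U = #A + (k + 1) := by rw [← hk, add_comm, card_sdiff_add_card_eq_card hA]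
    have hlayers : (k + 1) * #(rootedForests U A) = (k + 1) * (#A * #U ^ k) := calc
      _ = ∑ B ∈ (U \ A).powerset, #A ^ #B * (#B * (k + 1) ^ (k + 1 - #B)) := by
        rw [card_rootedForests_eq_sum hA, mul_sum]
        refine sum_congr rfl fun B hB => ?_
        rw [mul_left_comm, ← hk, ih _ (sdiff_ssubset hA hAne) (mem_powerset.1 hB)]
      _ = ∑ b ∈ range (k + 2), ((k + 1).choose b * b : ℕ) * (#A ^ b * (k + 1) ^ (k + 1 - b)) := by
        rw [sum_powerset_apply_card fun b => #A ^ b * (b * (k + 1) ^ (k + 1 - b)), hk]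
        exact sum_congr rfl fun b _ => by rw [smul_eq_mul]; ring
      _ = (k + 1) * (#A * #U ^ k) := by
        rw [← mul_assoc, hU_card]
        exact_mod_cast sum_choose_mul_mul_pow_mul_pow #A (k + 1) k
    rw [Nat.eq_of_mul_eq_mul_left k.succ_pos hlayers, show #U - #A = k + 1 by lia, pow_succ]
    ring

end Counting

end RootedForests

section GreedyPaths

open Relation

variable {V : Type*} [LinearOrder V] {R R' : V → V → Prop} {x u v y w : V}

/-- The step from `y` to `w` of a greedy increasing path along the relation `R`. -/
def IsGreedyStep (R : V → V → Prop) (y w : V) : Prop :=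
  IsLeast {z | R y z ∧ y < z} w

/-- `u` is the last vertex of the greedy increasing path from `x` along the relation `R`. The
relation need not be symmetric: it is the adjacency of a graph or the passage to a child. -/
def IsGreedyEnd (R : V → V → Prop) (x u : V) : Prop :=
  ReflTransGen (IsGreedyStep R) x u ∧ ∀ z, R u z → z ≤ u

lemma IsGreedyStep.lt (h : IsGreedyStep R y w) : y < w := h.1.2

lemma isGreedyEnd_self_iff : IsGreedyEnd R x x ↔ ∀ z, R x z → z ≤ x :=
  and_iff_right .refl

lemma IsGreedyEnd.unique (hu : IsGreedyEnd R x u) (hv : IsGreedyEnd R x v) : u = v := by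
  have eq_of_path {u v : V} (hu : IsGreedyEnd R x u) (huv : ReflTransGen (IsGreedyStep R) u v) :
      u = v := by
    obtain rfl | ⟨w, hw, -⟩ := huv.cases_head
    · rfl
    · exact absurd (hu.2 w hw.1.1) hw.lt.not_ge
  have hunique : Relator.RightUnique (IsGreedyStep R) := fun _ _ _ h h' => h.unique h'
  obtain huv | hvu := ReflTransGen.total_of_right_unique hunique hu.1 hv.1
  · exact eq_of_path hu huv
  · exact (eq_of_path hv hvu).symm

lemma exists_isGreedyEnd [Finite V] (R : V → V → Prop) (x : V) : ∃ u, IsGreedyEnd R x u := by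
  induction x using WellFoundedGT.induction with
  | ind x ih =>
    obtain hempty | hne := {z | R x z ∧ x < z}.eq_empty_or_nonempty
    · refine ⟨x, .refl, fun z hz => not_lt.1 fun hxz => ?_⟩
      exact hempty.subset (show z ∈ {z | R x z ∧ x < z} from ⟨hz, hxz⟩)
    · obtain ⟨w, hw⟩ := (Set.toFinite _).exists_minimal hne
      have hstep : IsGreedyStep R x w := ⟨hw.1, fun z hz => not_lt.1 fun h => hw.not_lt hz h⟩
      obtain ⟨u, hu⟩ := ih w hstep.lt
      exact ⟨u, hu.1.head hstep, hu.2⟩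

lemma IsGreedyEnd.congr {I : V → Prop} (h : IsGreedyEnd R x u) (hx : I x)
    (hI : ∀ y w, I y → y < w → R y w → I w) (hR : ∀ y w, I y → y < w → (R y w ↔ R' y w)) :
    IsGreedyEnd R' x u := by
  have hset (y) (hy : I y) : {z | R y z ∧ y < z} = {z | R' y z ∧ y < z} :=
    Set.ext fun z => and_congr_left (hR y z hy)
  obtain ⟨hpath, hend⟩ := h
  suffices ReflTransGen (IsGreedyStep R') x u ∧ I u by
    refine ⟨this.1, fun z hz => not_lt.1 fun huz => ?_⟩
    exact huz.not_ge (hend z ((hR u z this.2 huz).2 hz))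
  clear hend
  induction hpath with
  | refl => exact ⟨.refl, hx⟩
  | @tail y w _ hstep ih =>
    refine ⟨ih.1.tail ?_, hI y w ih.2 hstep.lt hstep.1.1⟩
    rwa [IsGreedyStep, ← hset y ih.2]

lemma isGreedyEnd_congr {I : V → Prop} (hx : I x) (hI : ∀ y w, I y → y < w → R y w → I w)
    (hR : ∀ y w, I y → y < w → (R y w ↔ R' y w)) :
    IsGreedyEnd R x u ↔ IsGreedyEnd R' x u :=
  ⟨fun h => h.congr hx hI hR, fun h =>
    h.congr hx (fun y w hy hyw hw => hI y w hy hyw ((hR y w hy hyw).2 hw))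
      fun y w hy hyw => (hR y w hy hyw).symm⟩

lemma isGreedyStep_and_lt_iff :
    IsGreedyStep (fun y w => R y w ∧ w < v) y w ↔ IsGreedyStep R y w ∧ w < v := by
  constructor
  · rintro ⟨⟨⟨hR, hwv⟩, hyw⟩, hmin⟩
    refine ⟨⟨⟨hR, hyw⟩, fun z hz => ?_⟩, hwv⟩
    obtain hzv | hvz := lt_or_ge z v
    · exact hmin ⟨⟨hz.1, hzv⟩, hz.2⟩
    · exact hwv.le.trans hvz
  · rintro ⟨⟨⟨hR, hyw⟩, hmin⟩, hwv⟩
    exact ⟨⟨⟨hR, hwv⟩, hyw⟩, fun z hz => hmin ⟨hz.1.1, hz.2⟩⟩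

lemma reflTransGen_isGreedyStep_and_lt_iff (hxv : x < v) :
    ReflTransGen (IsGreedyStep fun y w => R y w ∧ w < v) x u ↔
      ReflTransGen (IsGreedyStep R) x u ∧ u < v := by
  constructor
  · intro h
    induction h with
    | refl => exact ⟨.refl, hxv⟩
    | tail _ hstep ih =>
      obtain ⟨hstep', hlt⟩ := isGreedyStep_and_lt_iff.1 hstep
      exact ⟨ih.1.tail hstep', hlt⟩
  · rintro ⟨h, huv⟩
    induction h with
    | refl => exact .refl
    | tail _ hstep ih =>
      exact (ih (hstep.lt.trans huv)).tail (isGreedyStep_and_lt_iff.2 ⟨hstep, huv⟩)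

lemma isGreedyEnd_iff_of_lt (hxv : x < v) : IsGreedyEnd R x v ↔
    (∀ z, R v z → z ≤ v) ∧ ∃ u, R u v ∧ IsGreedyEnd (fun y w => R y w ∧ w < v) x u := by
  rw [IsGreedyEnd, and_comm]
  refine and_congr_right fun _ => ⟨fun h => ?_, ?_⟩
  · obtain rfl | ⟨u, hu, hstep⟩ := h.cases_tail
    · exact absurd hxv (lt_irrefl _)
    · refine ⟨u, hstep.1.1, (reflTransGen_isGreedyStep_and_lt_iff hxv).2 ⟨hu, hstep.lt⟩, ?_⟩
      exact fun z hz => not_lt.1 fun huz => hz.2.not_ge (hstep.2 ⟨hz.1, huz⟩)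
  · rintro ⟨u, huv, hpath, hend⟩
    obtain ⟨hpath, hlt⟩ := (reflTransGen_isGreedyStep_and_lt_iff hxv).1 hpath
    refine hpath.tail ⟨⟨huv, hlt⟩, fun z hz => not_lt.1 fun hzv => ?_⟩
    exact hz.2.not_ge (hend z ⟨hz.1, hzv⟩)

end GreedyPaths

section GreedyLast

open Relation

variable {m : ℕ} {t : SimpleGraph (Fin m)} {x v : Fin m}

lemma isGreedyStep_greedyNext_or (t : SimpleGraph (Fin m)) (y : Fin m) :
    IsGreedyStep t.Adj y (greedyNext t y) ∨
      (∀ z, t.Adj y z → z ≤ y) ∧ greedyNext t y = y := by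
  unfold greedyNext
  split_ifs with h
  · exact .inl (by simpa [IsGreedyStep] using isLeast_min' _ h)
  · exact .inr ⟨fun z hz => not_lt.1 fun hyz => h ⟨z, by simp [hz, hyz]⟩, rfl⟩

/-- Every step increases the label, so `m` steps suffice to reach the end of the path. -/
lemma isGreedyEnd_greedyLast (t : SimpleGraph (Fin m)) (x : Fin m) :
    IsGreedyEnd t.Adj x (greedyLast t x) := by
  have iterate (k : ℕ) : ReflTransGen (IsGreedyStep t.Adj) x ((greedyNext t)^[k] x) ∧
      (k ≤ ((greedyNext t)^[k] x).val ∨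
        ∀ z, t.Adj ((greedyNext t)^[k] x) z → z ≤ (greedyNext t)^[k] x) := by
    induction k with
    | zero => exact ⟨.refl, .inl (Nat.zero_le _)⟩
    | succ k ih =>
      rw [Function.iterate_succ_apply']
      obtain hstep | ⟨hend, hself⟩ := isGreedyStep_greedyNext_or t ((greedyNext t)^[k] x)
      · refine ⟨ih.1.tail hstep, .inl ?_⟩
        obtain hk | hend := ih.2
        · exact hk.trans_lt hstep.lt
        · exact absurd (hend _ hstep.1.1) hstep.lt.not_ge
      · rw [hself]
        exact ⟨ih.1, .inr hend⟩
  obtain ⟨hpath, hm | hend⟩ := iterate m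
  · exact absurd hm ((greedyNext t)^[m] x).isLt.not_ge
  · exact ⟨hpath, hend⟩

lemma greedyLast_eq_iff : greedyLast t x = v ↔ IsGreedyEnd t.Adj x v :=
  ⟨fun h => h ▸ isGreedyEnd_greedyLast t x, (isGreedyEnd_greedyLast t x).unique⟩

end GreedyLast

section ParentGraph

variable {V : Type*} {p : V → V} {c r x y : V}

/-- The graph that joins every vertex to its parent. -/
def parentGraph (p : V → V) : SimpleGraph V :=
  SimpleGraph.fromRel fun x y => p x = y

lemma parentGraph_adj : (parentGraph p).Adj x y ↔ x ≠ y ∧ (p x = y ∨ p y = x) :=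
  SimpleGraph.fromRel_adj _ x y

lemma parentGraph_le {t : SimpleGraph V} (h : ∀ x, p x ≠ x → t.Adj x (p x)) :
    parentGraph p ≤ t := by
  intro x y hxy
  obtain ⟨hne, rfl | rfl⟩ := parentGraph_adj.1 hxy
  · exact h x hne.symm
  · exact (h y hne).symm

lemma exists_adj_dist_lt {t : SimpleGraph V} (ht : t.Connected) (hx : x ≠ r) :
    ∃ y, t.Adj x y ∧ t.dist y r < t.dist x r := by
  obtain ⟨w, hw⟩ := ht.exists_walk_length_eq_dist x r
  cases w with
  | nil => exact absurd rfl hx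
  | cons hadj w =>
    refine ⟨_, hadj, ?_⟩
    rw [← hw, SimpleGraph.Walk.length_cons]
    exact Nat.lt_succ_of_le (SimpleGraph.dist_le w)

variable [DecidableEq V]

lemma IsRootedForest.adj_apply {U A : Finset V} (hp : IsRootedForest U A p) (hx : x ∈ U \ A) :
    (parentGraph p).Adj x (p x) :=
  parentGraph_adj.2 ⟨(hp.apply_ne_self hx).symm, .inl rfl⟩

variable [Fintype V]

namespace IsRootedForest

lemma connected_parentGraph (hp : IsRootedForest univ {r} p) : (parentGraph p).Connected := by
  have hreach (x : V) : (parentGraph p).Reachable x r := by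
    induction x using hp.induction with
    | fixed x hx =>
      obtain rfl : x = r := by simpa using hx
      exact .rfl
    | step x hx ih => exact (hp.adj_apply hx).reachable.trans ih
  have : Nonempty V := ⟨r⟩
  exact ⟨fun x y => (hreach x).trans (hreach y).symm⟩

/-- The graph is connected and has at most one edge for every vertex other than the root. -/
lemma isTree_parentGraph (hp : IsRootedForest univ {r} p) : (parentGraph p).IsTree := by
  have hconn := hp.connected_parentGraph
  refine SimpleGraph.isTree_iff_connected_and_card.2
    ⟨hconn, hconn.card_vert_le_card_edgeSet_add_one.antisymm' ?_⟩
  have hedges : (parentGraph p).edgeSet ⊆ (univ.erase r).image fun x => s(x, p x) := by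
    have hmem (x : V) (hx : p x ≠ x) :
        s(x, p x) ∈ ((univ.erase r).image fun x => s(x, p x) : Finset (Sym2 V)) := by
      refine mem_image_of_mem (fun x => s(x, p x)) (mem_erase.2 ⟨?_, mem_univ x⟩)
      rintro rfl
      exact hx (hp.apply_root (mem_singleton_self x))
    refine Sym2.ind fun x y hxy => ?_
    obtain ⟨hne, rfl | rfl⟩ := parentGraph_adj.1 ((parentGraph p).mem_edgeSet.1 hxy)
    · exact hmem x hne.symm
    · exact Sym2.eq_swap ▸ hmem y hne
  calc Nat.card (parentGraph p).edgeSet + 1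
    _ ≤ #(univ.erase r) + 1 := by
      gcongr
      rw [Nat.card_coe_set_eq]
      exact (Set.ncard_le_ncard hedges).trans_eq (Set.ncard_coe_finset _) |>.trans card_image_le
    _ = Nat.card V := by rw [card_erase_add_one (mem_univ r), card_univ, Nat.card_eq_fintype_card]

lemma eq_of_parentGraph_eq {q : V → V} (hp : IsRootedForest univ {r} p)
    (hq : IsRootedForest univ {r} q) (h : parentGraph p = parentGraph q) : p = q := by
  ext x
  induction x using hp.induction with
  | fixed x hx => rw [hp.apply_eq_self x hx, hq.apply_eq_self x hx]
  | step x hx ih =>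
    obtain hqx | hqpx := (parentGraph_adj.1 (h ▸ hp.adj_apply hx)).2
    · exact hqx.symm
    · exact absurd (ih.trans hqpx) (hp.apply_apply_ne_self hx)

end IsRootedForest

/-- The parent of a vertex is a neighbour that is closer to the root. -/
lemma exists_parentGraph_eq {t : SimpleGraph V} (ht : t.IsTree) (r : V) :
    ∃ p, IsRootedForest univ {r} p ∧ parentGraph p = t := by
  choose! p hadj hdist using fun x (hx : x ≠ r) => exists_adj_dist_lt ht.connected hx
  have hp : IsRootedForest univ {r} (Function.update p r r) := by
    refine ⟨by simp, by simp, fun x => t.dist x r, fun x hx => ?_⟩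
    have hxr : x ≠ r := by simpa using hx
    simpa [hxr] using hdist x hxr
  have hle : parentGraph (Function.update p r r) ≤ t := parentGraph_le fun x hx => by
    obtain rfl | hxr := eq_or_ne x r
    · simp at hx
    · simpa [hxr] using hadj x hxr
  exact ⟨_, hp, hle.antisymm <|
    (SimpleGraph.isTree_iff_minimal_connected.1 ht).2 hp.connected_parentGraph hle⟩

lemma bijOn_parentGraph (r : V) :
    Set.BijOn parentGraph {p | IsRootedForest univ {r} p} {t | t.IsTree} :=
  ⟨fun _ hp => hp.isTree_parentGraph, fun _ hp _ hq => hp.eq_of_parentGraph_eq hq,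
    fun _ ht => exists_parentGraph_eq ht r⟩

open Classical in
lemma card_isTree_and (P : SimpleGraph V → Prop) (r : V) :
    Nat.card {t : SimpleGraph V // t.IsTree ∧ P t} =
      #{p ∈ rootedForests univ {r} | P (parentGraph p)} := by
  have hbij := (bijOn_parentGraph r).subset_right (r := {t | t.IsTree ∧ P t}) fun t ht => ht.1
  refine (Nat.card_coe_set_eq {t | t.IsTree ∧ P t}).trans ?_
  rw [← hbij.ncard_eq, ← Set.ncard_coe_finset]
  congr 1
  ext p
  simp only [coe_filter, mem_rootedForests, Set.mem_inter_iff, Set.mem_ofPred_eq, Set.mem_preimage]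
  exact and_congr_right fun hp => and_iff_right hp.isTree_parentGraph

/-- The vertices whose parent is `c`, other than `c` itself. -/
def children (p : V → V) (c : V) : Finset V :=
  {x | x ≠ c ∧ p x = c}

lemma mem_children : x ∈ children p c ↔ x ≠ c ∧ p x = c := by simp [children]

namespace IsRootedForest

lemma ncard_neighborSet_root (hp : IsRootedForest univ {r} p) :
    ((parentGraph p).neighborSet r).ncard = #(children p r) := by
  have hr : p r = r := hp.apply_root (mem_singleton_self r)
  rw [← Set.ncard_coe_finset]
  congr 1
  ext x
  simp only [SimpleGraph.mem_neighborSet, parentGraph_adj, hr, mem_coe, mem_children]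
  grind

lemma ncard_neighborSet (hp : IsRootedForest univ {r} p) (hc : c ≠ r) :
    ((parentGraph p).neighborSet c).ncard = #(children p c) + 1 := by
  have hc' : c ∈ univ \ {r} := by simpa using hc
  have hpc : p c ≠ c := hp.apply_ne_self hc'
  rw [← card_insert_of_notMem (a := p c), ← Set.ncard_coe_finset]
  · congr 1
    ext x
    simp only [SimpleGraph.mem_neighborSet, parentGraph_adj, mem_coe, mem_insert, mem_children]
    grind
  · exact fun h => hp.apply_apply_ne_self hc' (mem_children.1 h).2

end IsRootedForest

end ParentGraph

section Cutting

namespace IsRootedForest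

variable {V : Type*} [DecidableEq V] {U A : Finset V} {p q : V → V} {u v : V}

lemma cut (hp : IsRootedForest U A p) (v : V) :
    IsRootedForest U (insert v A) (Function.update p v v) where
  apply_eq_self x hx := by
    obtain rfl | hxv := eq_or_ne x v
    · simp
    · simpa [hxv] using hp.apply_eq_self x (by simpa [hxv] using hx)
  apply_mem x hx := by
    obtain ⟨hxU, hxv, hxA⟩ : x ∈ U ∧ x ≠ v ∧ x ∉ A := by simpa using hx
    simpa [hxv] using hp.apply_mem x (mem_sdiff.2 ⟨hxU, hxA⟩)
  exists_height := by
    obtain ⟨h, hh⟩ := hp.exists_height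
    refine ⟨h, fun x hx => ?_⟩
    obtain ⟨hxU, hxv, hxA⟩ : x ∈ U ∧ x ≠ v ∧ x ∉ A := by simpa using hx
    simpa [hxv] using hh x (mem_sdiff.2 ⟨hxU, hxA⟩)

/-- The height is increased by a constant on the descendants of `v`. -/
lemma graft (hq : IsRootedForest U (insert v A) q) (hv : v ∈ U \ A) (hu : u ∈ U)
    (huA : ∃ k, q^[k] u ∈ A) : IsRootedForest U A (Function.update q v u) where
  apply_eq_self x hx := by
    have hxv : x ≠ v := fun h => hx (h ▸ hv)
    simpa [hxv] using hq.apply_eq_self x (by simp_all)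
  apply_mem x hx := by
    obtain rfl | hxv := eq_or_ne x v
    · simpa using hu
    · simpa [hxv] using hq.apply_mem x (by simp_all)
  exists_height := by
    classical
    obtain ⟨h, hh⟩ := hq.exists_height
    have hu_desc : ¬∃ k, q^[k] u = v := by
      rintro ⟨l, hl⟩
      obtain ⟨k, hk⟩ := huA
      have hv_fix : q^[k] v = v := Function.iterate_fixed (hq.apply_root (mem_insert_self v A)) k
      have hk_fix := Function.iterate_fixed (hq.apply_root (mem_insert_of_mem hk)) l
      rw [← Function.iterate_add_apply, add_comm, Function.iterate_add_apply, hl, hv_fix] at hk_fix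
      exact (mem_sdiff.1 hv).2 (hk_fix ▸ hk)
    refine ⟨fun x => h x + if ∃ k, q^[k] x = v then h u + 1 else 0, fun x hx => ?_⟩
    obtain rfl | hxv := eq_or_ne x v
    · have hx_desc : ∃ k, q^[k] x = x := ⟨0, rfl⟩
      simp only [Function.update_self, if_neg hu_desc, if_pos hx_desc]
      lia
    · have hdesc : (∃ k, q^[k] (q x) = v) → ∃ k, q^[k] x = v := fun ⟨k, hk⟩ => ⟨k + 1, hk⟩
      have hlt := hh x (by simp_all)
      simp only [Function.update_of_ne hxv]
      split_ifs <;> first | lia | simp_all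

end IsRootedForest

variable {V : Type*} [LinearOrder V] {p q : V → V} {r u v x : V}

lemma isGreedyEnd_parentGraph_iff (hx : p x ≤ x) :
    IsGreedyEnd (parentGraph p).Adj x v ↔ IsGreedyEnd (fun y w => p w = y) x v := by
  refine isGreedyEnd_congr (I := fun y => p y ≤ y) hx (fun y w hy hyw hadj => ?_)
    fun y w hy hyw => ?_
  · obtain hpy | hpw := (parentGraph_adj.1 hadj).2
    · exact absurd hy (hpy ▸ hyw.not_ge)
    · exact hpw.trans_le hyw.le
  · rw [parentGraph_adj, and_iff_right hyw.ne]
    exact or_iff_right (hy.trans_lt hyw).ne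

lemma exists_iterate_eq_of_isGreedyEnd
    (h : IsGreedyEnd (fun y w => q w = y ∧ w < v) x u) : ∃ k, q^[k] u = x := by
  obtain ⟨hpath, -⟩ := h
  induction hpath with
  | refl => exact ⟨0, rfl⟩
  | @tail y w _ hstep ih =>
    obtain ⟨k, hk⟩ := ih
    exact ⟨k + 1, by rwa [Function.iterate_succ_apply, hstep.1.1.1]⟩

variable [Fintype V]

lemma isGreedyEnd_iff_update (hxv : x < v) : IsGreedyEnd (fun y w => p w = y) x v ↔
    (∀ z ∈ children p v, z < v) ∧
      IsGreedyEnd (fun y w => Function.update p v v w = y ∧ w < v) x (p v) := by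
  have hrel : (fun y w => Function.update p v v w = y ∧ w < v) = fun y w => p w = y ∧ w < v := by
    ext y w
    exact and_congr_left fun hw => by rw [Function.update_of_ne hw.ne]
  rw [isGreedyEnd_iff_of_lt hxv, hrel]
  simp only [exists_eq_left', mem_children]
  exact and_congr_left fun _ => forall_congr' fun z => by grind

lemma children_update_self : children (Function.update p v v) v = children p v := by
  ext z
  simp only [mem_children]
  exact and_congr_right fun hz => by rw [Function.update_of_ne hz]

/-- The parent of the last vertex `v` is recovered as the end of the greedy path that only uses
labels below `v`. -/
theorem bijOn_cut (hrv : r < v) :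
    Set.BijOn (fun p => Function.update p v v)
      {p | IsRootedForest univ {r} p ∧ IsGreedyEnd (fun y w => p w = y) r v}
      {q | IsRootedForest univ {v, r} q ∧ ∀ x ∈ children q v, x < v} := by
  refine ⟨fun p ⟨hp, hend⟩ => ⟨hp.cut v, ?_⟩, fun p ⟨_, hp⟩ p' ⟨_, hp'⟩ h => ?_, ?_⟩
  · rw [children_update_self]
    exact ((isGreedyEnd_iff_update hrv).1 hend).1
  · have hpv := ((isGreedyEnd_iff_update hrv).1 hp).2
    have hpv' := ((isGreedyEnd_iff_update hrv).1 hp').2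
    beta_reduce at h
    rw [h] at hpv
    ext x
    obtain rfl | hxv := eq_or_ne x v
    · exact hpv.unique hpv'
    · simpa [hxv] using congrFun h x
  · rintro q ⟨hq, hchildren⟩
    obtain ⟨u, hu⟩ := exists_isGreedyEnd (fun y w => q w = y ∧ w < v) r
    have hcut : Function.update (Function.update q v u) v v = q := by
      rw [Function.update_idem, Function.update_eq_iff]
      exact ⟨(hq.apply_root (mem_insert_self _ _)).symm, fun _ _ => rfl⟩
    refine ⟨Function.update q v u, ⟨hq.graft (by simpa using hrv.ne') (mem_univ u) ?_, ?_⟩, hcut⟩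
    · simpa using exists_iterate_eq_of_isGreedyEnd hu
    · rw [isGreedyEnd_iff_update hrv, hcut, Function.update_self, ← children_update_self, hcut]
      exact ⟨hchildren, hu⟩

lemma apply_eq_root_iff (hr : IsBot r) (hrv : r < v)
    (hend : IsGreedyEnd (fun y w => p w = y) r v) :
    p v = r ↔ ∀ x ∈ children (Function.update p v v) r, v < x := by
  have hpv := ((isGreedyEnd_iff_update hrv).1 hend).2
  calc p v = r
    _ ↔ IsGreedyEnd (fun y w => Function.update p v v w = y ∧ w < v) r r :=
      ⟨fun h => h ▸ hpv, hpv.unique⟩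
    _ ↔ _ := by
      rw [isGreedyEnd_self_iff]
      refine forall_congr' fun x => ⟨fun h hx => ?_, fun h ⟨hqx, hxv⟩ => ?_⟩
      · obtain ⟨hxr, hqx⟩ := mem_children.1 hx
        have hvx : v ≤ x := not_lt.1 fun hxv => hxr ((h ⟨hqx, hxv⟩).antisymm (hr x))
        refine hvx.lt_of_ne ?_
        rintro rfl
        exact hxr (by simpa using hqx)
      · exact not_lt.1 fun hrx => hxv.not_gt (h (mem_children.2 ⟨hrx.ne', hqx⟩))

/-- The path has a single edge exactly if all children of the root in the cut forest lie above `v`;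
this edge is then lost by cutting. -/
lemma card_children_root (hr : IsBot r) (hrv : r < v)
    (hend : IsGreedyEnd (fun y w => p w = y) r v) :
    #(children p r) = #(children (Function.update p v v) r) +
      if ∀ x ∈ children (Function.update p v v) r, v < x then 1 else 0 := by
  have hv : v ∉ children (Function.update p v v) r := by simp [mem_children, hrv.ne']
  simp only [← apply_eq_root_iff hr hrv hend]
  split_ifs with h
  · rw [← card_insert_of_notMem hv]
    congr 1
    ext x
    grind [mem_children, Function.update_apply]
  · congr 1
    ext x
    grind [mem_children, Function.update_apply]

end Cutting

section ChildrenOfRoots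

variable {V : Type*} [Fintype V] [DecidableEq V] {r s : V} {A B : Finset V}

lemma card_mul_card_filter_children_eq (hrs : r ≠ s) (hA : A ⊆ {s, r}ᶜ) (hB : B ⊆ {s, r}ᶜ)
    (hAB : Disjoint A B) :
    #({s, r}ᶜ : Finset V) *
        #{q ∈ rootedForests univ {s, r} | children q r = A ∧ children q s = B} =
      (#A + #B) * #({s, r}ᶜ : Finset V) ^ (#({s, r}ᶜ : Finset V) - (#A + #B)) := by
  have hparent : ∀ x ∈ A ∪ B, (if x ∈ A then r else s) ∈ ({s, r} : Finset V) :=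
    fun x _ => by split_ifs <;> simp
  rw [← card_union_of_disjoint hAB, ← card_mul_card_rootedForests (union_subset hA hB),
    compl_eq_univ_sdiff, ← card_filter_firstLayer_parents (subset_univ _) _ hparent]
  · congr 2
    refine filter_congr fun q hq => ?_
    rw [mem_rootedForests] at hq
    have hr : q r = r := hq.apply_root (by simp)
    have hs : q s = s := hq.apply_root (by simp)
    have hA' (x) (hx : x ∈ A) : x ≠ s ∧ x ≠ r := by simpa using hA hx
    have hB' (x) (hx : x ∈ B) : x ≠ s ∧ x ≠ r := by simpa using hB hx
    have hAB' (x) (hxA : x ∈ A) (hxB : x ∈ B) : False := disjoint_left.1 hAB hxA hxB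
    simp only [Finset.ext_iff, mem_children, mem_union, mem_sdiff, mem_univ, mem_insert,
      mem_singleton, true_and]
    refine ⟨fun h x hx => ?_, fun h => ⟨fun x => ?_, fun x => ?_⟩⟩ <;> grind
  · exact compl_eq_univ_sdiff {s, r} ▸ union_subset hA hB

end ChildrenOfRoots

section DisjointPairs

variable {α : Type*} [DecidableEq α]

lemma card_filter_disjoint_powersetCard {S T : Finset α} (hTS : T ⊆ S) (a b : ℕ) :
    #{P ∈ powersetCard a S ×ˢ powersetCard b T | Disjoint P.1 P.2} =
      (#T).choose b * (#S - b).choose a := by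
  rw [card_filter, sum_product_right]
  simp only [← card_filter]
  rw [← card_powersetCard b T, ← smul_eq_mul]
  refine sum_const_nat fun B hB => ?_
  obtain ⟨hBT, rfl⟩ := mem_powersetCard.1 hB
  rw [← card_sdiff_of_subset (hBT.trans hTS), ← card_powersetCard]
  congr 1
  ext A
  simp only [mem_filter, mem_powersetCard, subset_sdiff]
  tauto

end DisjointPairs

section LastVertex

variable {n a b : ℕ} {v : Fin (n + 1)} {q : Fin (n + 1) → Fin (n + 1)}

/-- The possible values, with cardinalities `a` and `b`, of the pair of the sets of children of the
two roots `0` and `v` in a forest in which all children of `v` are smaller than `v`. -/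
def layerPairs (v : Fin (n + 1)) (a b : ℕ) : Finset (Finset (Fin (n + 1)) × Finset (Fin (n + 1))) :=
  {P ∈ powersetCard a {v, 0}ᶜ ×ˢ powersetCard b (Ioo 0 v) | Disjoint P.1 P.2}

lemma card_compl_pair_zero (hv : v ≠ 0) : #({v, 0}ᶜ : Finset (Fin (n + 1))) = n - 1 := by
  rw [card_compl, card_pair hv, Fintype.card_fin]
  rfl

lemma Ioo_zero_subset (v : Fin (n + 1)) : Ioo 0 v ⊆ {v, 0}ᶜ := by
  intro x hx
  obtain ⟨hx0, hxv⟩ := mem_Ioo.1 hx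
  simp [hx0.ne', hxv.ne]

lemma card_layerPairs (k : Fin n) :
    #(layerPairs k.succ a b) = k.val.choose b * (n - 1 - b).choose a := by
  rw [layerPairs, card_filter_disjoint_powersetCard (Ioo_zero_subset _),
    card_compl_pair_zero k.succ_ne_zero]
  simp

lemma card_filter_layerPairs_subset_Ioi (k : Fin n) :
    #{P ∈ layerPairs k.succ a b | P.1 ⊆ Ioi k.succ} =
      k.val.choose b * (n - 1 - k.val).choose a := by
  have hprod : {P ∈ layerPairs k.succ a b | P.1 ⊆ Ioi k.succ} =
      powersetCard a (Ioi k.succ) ×ˢ powersetCard b (Ioo 0 k.succ) := by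
    ext ⟨A, B⟩
    have hIoi : Ioi k.succ ⊆ {k.succ, 0}ᶜ := fun x hx => by
      simp [(mem_Ioi.1 hx).ne', ((Fin.succ_pos k).trans (mem_Ioi.1 hx)).ne']
    have hdisj : Disjoint (Ioi k.succ) (Ioo 0 k.succ) :=
      disjoint_left.2 fun x hx hx' => (mem_Ioi.1 hx).not_gt (mem_Ioo.1 hx').2
    simp only [layerPairs, mem_filter, mem_product, mem_powersetCard]
    constructor
    · rintro ⟨⟨⟨⟨-, hA⟩, hB⟩, -⟩, hAv⟩
      exact ⟨⟨hAv, hA⟩, hB⟩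
    · rintro ⟨⟨hAv, hA⟩, hB⟩
      exact ⟨⟨⟨⟨hAv.trans hIoi, hA⟩, hB⟩, hdisj.mono hAv hB.1⟩, hAv⟩
  rw [hprod, card_product, card_powersetCard, card_powersetCard, mul_comm]
  simp [Nat.sub_sub, add_comm]

lemma mem_layerPairs_children_iff (hv : v ≠ 0) (hq : IsRootedForest univ {v, 0} q) :
    (children q 0, children q v) ∈ layerPairs v a b ↔
      #(children q 0) = a ∧ #(children q v) = b ∧ ∀ x ∈ children q v, x < v := by
  have hq0 : q 0 = 0 := hq.apply_root (by simp)
  have hqv : q v = v := hq.apply_root (by simp)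
  have hsub : children q 0 ⊆ {v, 0}ᶜ := fun x hx => by
    obtain ⟨hx0, hqx⟩ := mem_children.1 hx
    have hxv : x ≠ v := by
      rintro rfl
      exact hv (hqv.symm.trans hqx)
    simp [hx0, hxv]
  have hdisj : Disjoint (children q 0) (children q v) := disjoint_left.2 fun x hx hx' =>
    hv ((mem_children.1 hx').2.symm.trans (mem_children.1 hx).2)
  have hpos (x) (hx : x ∈ children q v) : 0 < x := by
    refine Fin.pos_iff_ne_zero.2 ?_
    rintro rfl
    exact hv ((mem_children.1 hx).2.symm.trans hq0)
  have hIoo : children q v ⊆ Ioo 0 v ↔ ∀ x ∈ children q v, x < v :=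
    forall₂_congr fun x hx => by rw [mem_Ioo, and_iff_right (hpos x hx)]
  simp only [layerPairs, mem_filter, mem_product, mem_powersetCard, hsub, hIoo, hdisj]
  tauto

lemma mul_card_filter_children_mem (hv : v ≠ 0)
    {T : Finset (Finset (Fin (n + 1)) × Finset (Fin (n + 1)))} (hT : T ⊆ layerPairs v a b) :
    (n - 1) * #{q ∈ rootedForests univ {v, 0} | (children q 0, children q v) ∈ T} =
      #T * ((a + b) * (n - 1) ^ (n - 1 - (a + b))) := by
  rw [card_eq_sum_card_fiberwise (f := fun q => (children q 0, children q v)) (t := T)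
    (fun q hq => mem_coe.2 (mem_filter.1 (mem_coe.1 hq)).2), mul_sum]
  refine sum_const_nat fun ⟨A, B⟩ hAB => ?_
  have hAB' := hT hAB
  simp only [layerPairs, mem_filter, mem_product, mem_powersetCard] at hAB'
  obtain ⟨⟨⟨hA, rfl⟩, hB, rfl⟩, hdisj⟩ := hAB'
  rw [← card_compl_pair_zero hv,
    ← card_mul_card_filter_children_eq hv.symm hA (hB.trans (Ioo_zero_subset v)) hdisj,
    filter_filter]
  congr 2
  refine filter_congr fun q _ => ?_
  rw [Prod.mk.injEq]
  exact and_iff_right_of_imp fun h => by simpa only [h.1, h.2] using hAB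

lemma mem_union_layerPairs_children_iff (hv : v ≠ 0) (hq : IsRootedForest univ {v, 0} q) :
    (children q 0, children q v) ∈
        {P ∈ layerPairs v a b | P.1 ⊆ Ioi v} ∪ {P ∈ layerPairs v (a + 1) b | ¬P.1 ⊆ Ioi v} ↔
      (∀ x ∈ children q v, x < v) ∧
        #(children q 0) + (if ∀ x ∈ children q 0, v < x then 1 else 0) = a + 1 ∧
        #(children q v) = b := by
  have hIoi : children q 0 ⊆ Ioi v ↔ ∀ x ∈ children q 0, v < x :=
    forall₂_congr fun x _ => mem_Ioi
  simp only [mem_union, mem_filter, mem_layerPairs_children_iff hv hq, hIoi]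
  split_ifs with h
  · simp only [Nat.add_right_cancel_iff]
    tauto
  · simp only [h, add_zero]
    tauto

open Classical in
/-- Cutting costs the root a child exactly if the path has a single edge. -/
lemma card_filter_isGreedyEnd (hv : v ≠ 0) :
    #{p ∈ rootedForests univ {0} | IsGreedyEnd (fun y w => p w = y) 0 v ∧
        #(children p 0) = a + 1 ∧ #(children p v) = b} =
      #{q ∈ rootedForests univ {v, 0} | (children q 0, children q v) ∈
        {P ∈ layerPairs v a b | P.1 ⊆ Ioi v} ∪ {P ∈ layerPairs v (a + 1) b | ¬P.1 ⊆ Ioi v}} := by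
  have hv0 : 0 < v := Fin.pos_iff_ne_zero.2 hv
  set T := {P ∈ layerPairs v a b | P.1 ⊆ Ioi v} ∪ {P ∈ layerPairs v (a + 1) b | ¬P.1 ⊆ Ioi v}
  have hbij := (bijOn_cut hv0).subset_right
    (r := {q | IsRootedForest univ {v, 0} q ∧ (children q 0, children q v) ∈ T})
    fun q ⟨hq, hT⟩ => ⟨hq, ((mem_union_layerPairs_children_iff hv hq).1 hT).1⟩
  have hmem (p) (hp : IsRootedForest univ {0} p) (hend : IsGreedyEnd (fun y w => p w = y) 0 v) :
      (children (Function.update p v v) 0, children (Function.update p v v) v) ∈ T ↔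
        #(children p 0) = a + 1 ∧ #(children p v) = b := by
    rw [mem_union_layerPairs_children_iff hv (hp.cut v),
      and_iff_right ((bijOn_cut hv0).mapsTo ⟨hp, hend⟩).2, children_update_self,
      card_children_root Fin.zero_le hv0 hend]
    congr!
  rw [← Set.ncard_coe_finset, ← Set.ncard_coe_finset]
  convert hbij.ncard_eq using 2
  · ext p
    simp only [coe_filter, mem_rootedForests, Set.mem_ofPred_eq, Set.mem_inter_iff,
      Set.mem_preimage]
    constructor
    · rintro ⟨hp, hend, hcard⟩
      exact ⟨⟨hp, hend⟩, hp.cut v, (hmem p hp hend).2 hcard⟩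
    · rintro ⟨⟨hp, hend⟩, -, hT⟩
      exact ⟨hp, hend, (hmem p hp hend).1 hT⟩
  · ext q
    simp [mem_rootedForests]

open Classical in
lemma mul_card_filter_isGreedyEnd (hv : v ≠ 0) :
    (n - 1) * #{p ∈ rootedForests univ {0} | IsGreedyEnd (fun y w => p w = y) 0 v ∧
        #(children p 0) = a + 1 ∧ #(children p v) = b} =
      #{P ∈ layerPairs v a b | P.1 ⊆ Ioi v} * ((a + b) * (n - 1) ^ (n - 1 - (a + b))) +
      #{P ∈ layerPairs v (a + 1) b | ¬P.1 ⊆ Ioi v} *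
        ((a + 1 + b) * (n - 1) ^ (n - 1 - (a + 1 + b))) := by
  rw [card_filter_isGreedyEnd hv, ← mul_card_filter_children_mem hv (filter_subset _ _),
    ← mul_card_filter_children_mem hv (filter_subset _ _), ← mul_add]
  simp only [mem_union]
  rw [filter_or, card_union_of_disjoint]
  refine disjoint_filter.2 fun q _ hq hq' => (mem_filter.1 hq').2 (mem_filter.1 hq).2

end LastVertex

section Sums

/-- Both sides count the `(b + c + 1)`-subsets of `{0, …, m}`, the left side according to the
element `k` with exactly `b` smaller elements in the subset. -/
lemma sum_choose_mul_choose (b c m : ℕ) :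
    ∑ k ∈ range (m + 1), k.choose b * (m - k).choose c = (m + 1).choose (b + c + 1) := by
  induction m generalizing c with
  | zero => cases b <;> cases c <;> simp [Nat.choose_eq_zero_of_lt]
  | succ m ih =>
    rw [sum_range_succ, Nat.sub_self]
    cases c with
    | zero =>
      have ih₀ := ih 0
      simp only [Nat.choose_zero_right, mul_one, add_zero] at ih₀ ⊢
      rw [ih₀, add_comm, ← Nat.choose_succ_succ]
    | succ c =>
      have pascal : ∀ k ∈ range (m + 1), k.choose b * (m + 1 - k).choose (c + 1) =
          k.choose b * (m - k).choose c + k.choose b * (m - k).choose (c + 1) := fun k hk => by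
        rw [Nat.succ_sub (mem_range_succ_iff.1 hk), Nat.choose_succ_succ, mul_add]
      rw [sum_congr rfl pascal, sum_add_distrib, ih, ih, Nat.choose_zero_succ, mul_zero, add_zero,
        ← add_assoc b c 1, ← Nat.choose_succ_succ]

lemma sum_card_filter_layerPairs_subset_Ioi (a b m : ℕ) :
    ∑ k : Fin (m + 1), #{P ∈ layerPairs k.succ a b | P.1 ⊆ Ioi k.succ} =
      (m + 1).choose (a + b + 1) := by
  simp only [card_filter_layerPairs_subset_Ioi, Nat.add_sub_cancel]
  rw [Fin.sum_univ_eq_sum_range (fun k => k.choose b * (m - k).choose a), sum_choose_mul_choose,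
    add_comm b a]

lemma sum_card_layerPairs (a b m : ℕ) :
    ∑ k : Fin (m + 1), #(layerPairs k.succ a b) = (m + 1).choose (b + 1) * (m - b).choose a := by
  simp only [card_layerPairs, Nat.add_sub_cancel]
  rw [← sum_mul, Fin.sum_univ_eq_sum_range (fun k => k.choose b)]
  congr 1
  simpa using sum_choose_mul_choose b 0 m

lemma sum_card_filter_layerPairs_not_subset_Ioi (a b m : ℕ) :
    ∑ k : Fin (m + 1), #{P ∈ layerPairs k.succ a b | ¬P.1 ⊆ Ioi k.succ} +
      (m + 1).choose (a + b + 1) = (m + 1).choose (b + 1) * (m - b).choose a := by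
  rw [← sum_card_filter_layerPairs_subset_Ioi, ← sum_add_distrib, ← sum_card_layerPairs]
  refine sum_congr rfl fun k _ => ?_
  rw [add_comm, card_filter_add_card_filter_not]

end Sums

section Trees

variable {n : ℕ} {p : Fin (n + 1) → Fin (n + 1)}

lemma deg1_parentGraph (hp : IsRootedForest univ {0} p) :
    deg1 (parentGraph p) = #(children p 0) := by
  rw [deg1, dif_pos n.succ_pos]
  exact hp.ncard_neighborSet_root

lemma greedyLast_parentGraph_eq_iff (hp : IsRootedForest univ {0} p) (v : Fin (n + 1)) :
    greedyLast (parentGraph p) 0 = v ↔ IsGreedyEnd (fun y w => p w = y) 0 v := by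
  rw [greedyLast_eq_iff, isGreedyEnd_parentGraph_iff (hp.apply_root (mem_singleton_self 0)).le]

lemma deg2'_parentGraph (hp : IsRootedForest univ {0} p) {k : Fin n}
    (hend : IsGreedyEnd (fun y w => p w = y) 0 k.succ) :
    deg2' (parentGraph p) = #(children p k.succ) + 1 := by
  rw [deg2', dif_pos n.succ_pos]
  change ((parentGraph p).neighborSet (greedyLast (parentGraph p) 0)).ncard = _
  rw [(greedyLast_parentGraph_eq_iff hp _).2 hend, hp.ncard_neighborSet k.succ_ne_zero]

lemma exists_isGreedyEnd_succ {x : Fin (n + 1)} (hx : x ∈ children p 0) :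
    ∃ k : Fin n, IsGreedyEnd (fun y w => p w = y) 0 k.succ := by
  obtain ⟨v, hv⟩ := exists_isGreedyEnd (fun y w => p w = y) 0
  obtain ⟨hx0, hpx⟩ := mem_children.1 hx
  have hv0 : v ≠ 0 := by
    rintro rfl
    exact hx0 (Fin.le_zero_iff.1 (isGreedyEnd_self_iff.1 hv x hpx))
  obtain ⟨k, rfl⟩ := Fin.exists_succ_eq.2 hv0
  exact ⟨k, hv⟩

open Classical in
lemma card_trees_eq_sum (n a b : ℕ) :
    Nat.card {t : SimpleGraph (Fin (n + 1)) // t.IsTree ∧ deg1 t = a + 1 ∧ deg2' t = b + 1} =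
      ∑ k : Fin n, #{p ∈ rootedForests univ {0} | IsGreedyEnd (fun y w => p w = y) 0 k.succ ∧
        #(children p 0) = a + 1 ∧ #(children p k.succ) = b} := by
  rw [card_isTree_and _ 0, ← card_biUnion]
  · congr 1
    ext p
    simp only [mem_filter, mem_biUnion, mem_univ, true_and, mem_rootedForests, exists_and_left]
    refine and_congr_right fun hp => ?_
    rw [deg1_parentGraph hp]
    constructor
    · rintro ⟨h₁, h₂⟩
      obtain ⟨x, hx⟩ := card_pos.1 (by lia : 0 < #(children p 0))
      obtain ⟨k, hk⟩ := exists_isGreedyEnd_succ hx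
      exact ⟨k, hk, h₁, Nat.succ_injective ((deg2'_parentGraph hp hk).symm.trans h₂)⟩
    · rintro ⟨k, hk, h₁, h₂⟩
      exact ⟨h₁, by rw [deg2'_parentGraph hp hk, h₂]⟩
  · exact fun k _ l _ hkl => disjoint_filter.2 fun p _ hk hl =>
      hkl (Fin.succ_injective n (hk.1.unique hl.1))

theorem mul_card_trees_add (a b m : ℕ) :
    m * Nat.card {t : SimpleGraph (Fin (m + 2)) //
        t.IsTree ∧ deg1 t = a + 1 ∧ deg2' t = b + 1} +
      (m + 1).choose (a + b + 2) * ((a + b + 1) * m ^ (m - (a + b + 1))) =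
    (m + 1).choose (a + b + 1) * ((a + b) * m ^ (m - (a + b))) +
      (m + 1).choose (b + 1) * (m - b).choose (a + 1) *
        ((a + b + 1) * m ^ (m - (a + b + 1))) := by
  have hlast (k : Fin (m + 1)) := mul_card_filter_isGreedyEnd (a := a) (b := b) k.succ_ne_zero
  simp only [Nat.add_sub_cancel] at hlast
  rw [card_trees_eq_sum, mul_sum, sum_congr rfl fun k _ => hlast k, sum_add_distrib, ← sum_mul,
    ← sum_mul, sum_card_filter_layerPairs_subset_Ioi, ← sum_card_filter_layerPairs_not_subset_Ioi]
  ring_nf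

end Trees

section Factorials

open scoped Nat

lemma cast_choose_mul_choose (i j d : ℕ) :
    ((i + j + d).choose j * (i + d).choose i : ℚ) = (i + j + d)! / (i ! * j ! * d !) := by
  rw [show i + j + d = j + (i + d) by ring, Nat.cast_add_choose, Nat.cast_add_choose]
  field_simp

theorem mul_card_trees_eq_factorials (a b d : ℕ) :
    (a + b + d + 1 : ℚ) * Nat.card {t : SimpleGraph (Fin (a + b + d + 3)) //
        t.IsTree ∧ deg1 t = a + 1 ∧ deg2' t = b + 1} =
      (a + b + d + 2)! / d ! * (a + b + d + 1 : ℚ) ^ d *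
        ((a + b) * (a + b + d + 1) / ((a + b + 1)! * (d + 1))
          + (a + b + 1) / ((a + 1)! * (b + 1)!) - (a + b + 1) / (a + b + 2)!) := by
  have hcount := congrArg (Nat.cast (R := ℚ)) (mul_card_trees_add a b (a + b + d + 1))
  have hnear := Nat.cast_add_choose ℚ (a := a + b + 1) (b := d + 1)
  have htotal := Nat.cast_add_choose ℚ (a := a + b + 2) (b := d)
  have hpairs := cast_choose_mul_choose (a + 1) (b + 1) d
  rw [show a + b + 1 + (d + 1) = a + b + d + 2 by ring, Nat.factorial_succ d] at hnear
  rw [show a + b + 2 + d = a + b + d + 2 by ring] at htotal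
  rw [show a + 1 + (b + 1) + d = a + b + d + 2 by ring] at hpairs
  rw [show a + b + d + 1 - (a + b + 1) = d by lia, show a + b + d + 1 - (a + b) = d + 1 by lia,
    show a + b + d + 1 - b = a + 1 + d by lia] at hcount
  push_cast at hcount hnear ⊢
  rw [hnear, htotal, hpairs, ← eq_sub_iff_add_eq] at hcount
  rw [hcount]
  field_simp
  ring

end Factorials

/-- Theorem 1.1 reformulated on Cayley trees: the joint law of `(deg_1, deg'_2)` on
uniform Cayley trees with `n+1` vertices. -/
theorem stmt_1 (i j n : ℕ) (hi : 1 ≤ i) (hj : 1 ≤ j) (hn : i + j ≤ n) :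
    ((n : ℚ) - 1) *
      (Nat.card {t : SimpleGraph (Fin (n + 1)) //
        t.IsTree ∧ deg1 t = i ∧ deg2' t = j} : ℚ) =
    ((n.factorial : ℚ) / ((n - i - j).factorial : ℚ)) * ((n : ℚ) - 1) ^ (n - i - j) *
      ( ((i : ℚ) + (j : ℚ) - 2) * ((n : ℚ) - 1) /
          ((((i + j - 1).factorial : ℚ)) * ((n : ℚ) - (i : ℚ) - (j : ℚ) + 1))
        + ((i : ℚ) + (j : ℚ) - 1) / ((i.factorial : ℚ) * (j.factorial : ℚ))
        - ((i : ℚ) + (j : ℚ) - 1) / (((i + j).factorial : ℚ)) ) := by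
  obtain ⟨a, rfl⟩ := Nat.exists_eq_add_of_le' hi
  obtain ⟨b, rfl⟩ := Nat.exists_eq_add_of_le' hj
  obtain ⟨d, rfl⟩ := Nat.exists_eq_add_of_le hn
  have hn' : a + 1 + (b + 1) + d = a + b + d + 2 := by ring
  have hd : a + b + d + 2 - (a + 1) - (b + 1) = d := by lia
  have hij : a + 1 + (b + 1) = a + b + 2 := by ring
  have hpred : ((a + b + d + 2 : ℕ) : ℚ) - 1 = a + b + d + 1 := by push_cast; ring
  rw [hn', hd, hij, hpred, show a + b + 2 - 1 = a + b + 1 from rfl]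
  convert mul_card_trees_eq_factorials a b d using 5 <;> push_cast <;> ring
end

section
/- For every integer n ≥ 2 and all integers i, j, k ≥ 0, the number of minimal factorizations f ∈ 𝔐_n with T_1(f) = i, T_2(f) = j and M_1(f) = k equals the number of Cayley trees t on {1, …, n} with deg_1(t) = i, deg'_2(t) = j and |L_1(t)| = k. -/
/- `M_v`: the number of transpositions of `τ` affecting the trajectory of `v`;
here `((List.ofFn τ).take ℓ).reverse.prod v = (τ_ℓ ∘ ⋯ ∘ τ_1) v` is the position of `v`
just before the `(ℓ+1)`-st transposition is applied. -/
def Mcount {k m : ℕ} (τ : Fin k → Equiv.Perm (Fin m)) (v : Fin m) : ℕ :=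
  (Finset.univ.filter fun ℓ : Fin k =>
    τ ℓ (((List.ofFn τ).take ℓ).reverse.prod v) ≠ ((List.ofFn τ).take ℓ).reverse.prod v).card

/-!
Both sides are in bijection with the parent functions `p` of trees on `{0, …, m}` rooted at `0`,
where `n = m + 1`. Given `p`, use the edge from `ℓ + 1` to its parent at time `ℓ`. Multiplying by a
transposition that exchanges points of different cycles merges these cycles, so the product over
all edges is a single cycle, and exactly one relabelling of the vertices fixing the root turns it
into `0 ↦ 1 ↦ ⋯ ↦ m ↦ 0`. Conversely, the transpositions of a minimal factorization connect `n`
points with `n - 1` edges, hence form a tree, and `p` is recovered by naming each vertex `v ≠ 0`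
after the time at which the edge from `v` towards `0` is used.

The number of transpositions moving a vertex is its degree. The trajectory of the root starts at the
smallest label and can only move along an edge not used so far, that is, to its smallest neighbour
with a larger label: it is the greedy increasing path, and it ends at the vertex which the
relabelling sends to the image of `0` under the full cycle.
-/

namespace MinimalFactorization

open Equiv Equiv.Perm

/-! ### Permutations with a single cycle -/

section Perm

variable {α β : Type*} {f g c d : Perm α} {x y a b : α}

lemma isCycleOn_univ_iff : f.IsCycleOn Set.univ ↔ ∀ a b, f.SameCycle a b := by
  simp only [IsCycleOn, Set.bijOn_univ, f.bijective, Set.mem_univ, true_and, forall_const]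

lemma apply_eq_of_sameCycle {φ : α → β} (hφ : ∀ v, φ (f v) = φ v) (h : f.SameCycle a b) :
    φ a = φ b := by
  have hinv (v) : φ (f⁻¹ v) = φ v := by simpa using (hφ (f⁻¹ v)).symm
  obtain ⟨i, rfl⟩ := h
  induction i using Int.induction_on with
  | zero => rfl
  | succ i ih => rw [add_comm, zpow_add, mul_apply, zpow_one, hφ, ih]
  | pred i ih => rw [sub_eq_neg_add, zpow_add, mul_apply, zpow_neg_one, hinv, ih]

lemma sameCycle_of_forall_sameCycle_apply (h : ∀ v, g.SameCycle v (f v)) (hab : f.SameCycle a b) :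
    g.SameCycle a b :=
  Quotient.exact (s := SameCycle.setoid g)
    (apply_eq_of_sameCycle (fun v => Quotient.sound (s := SameCycle.setoid g) (h v).symm) hab)

lemma exists_conj_eq [Finite α] (hc : c.IsCycleOn Set.univ) (hd : d.IsCycleOn Set.univ) :
    ∃ π : Perm α, π * c * π⁻¹ = d := by
  classical
  have := Fintype.ofFinite α
  cases subsingleton_or_nontrivial α
  · exact ⟨1, Subsingleton.elim _ _⟩
  have isCycle {f : Perm α} (hf : f.IsCycleOn Set.univ) : f.IsCycle ∧ f.support = Finset.univ :=
    have hne (v) : f v ≠ v := hf.apply_ne Set.nontrivial_univ trivial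
    ⟨isCycle_iff_exists_isCycleOn.2 ⟨_, Set.nontrivial_univ, hf, fun v _ => trivial⟩,
      Finset.eq_univ_iff_forall.2 fun v => mem_support.2 (hne v)⟩
  obtain ⟨hc, hcs⟩ := isCycle hc
  obtain ⟨hd, hds⟩ := isCycle hd
  exact isConj_iff.1 (hc.isConj hd (by rw [hcs, hds]))

lemma eq_of_conj_eq_conj (hc : c.IsCycleOn Set.univ) {π ρ : Perm α} (ha : π a = ρ a)
    (h : π * c * π⁻¹ = ρ * c * ρ⁻¹) : π = ρ := by
  have hcomm : Commute c (ρ⁻¹ * π) := by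
    calc c * (ρ⁻¹ * π) = ρ⁻¹ * (ρ * c * ρ⁻¹) * π := by group
      _ = ρ⁻¹ * π * c := by rw [← h]; group
  have hfix : (ρ⁻¹ * π) a = a := inv_eq_iff_eq.2 ha
  suffices h : ρ⁻¹ * π = 1 from (inv_mul_eq_one.1 h).symm
  ext v
  obtain ⟨i, rfl⟩ := isCycleOn_univ_iff.1 hc a v
  rw [← mul_apply, ← (hcomm.zpow_left i).eq, mul_apply, hfix, one_apply]

lemma existsUnique_conj_eq [Finite α] (hc : c.IsCycleOn Set.univ) (hd : d.IsCycleOn Set.univ)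
    (a b : α) : ∃! π : Perm α, π a = b ∧ π * c * π⁻¹ = d := by
  obtain ⟨π, hπ⟩ := exists_conj_eq hc hd
  obtain ⟨i, hi⟩ := isCycleOn_univ_iff.1 hd (π a) b
  refine ⟨d ^ i * π, ⟨hi, ?_⟩, fun ρ hρ => eq_of_conj_eq_conj hc (hρ.1.trans hi.symm) ?_⟩
  all_goals
    have hconj : d ^ i * π * c * (d ^ i * π)⁻¹ = d := by
      rw [mul_inv_rev, ← mul_assoc, mul_assoc _ π c, mul_assoc _ (π * c), hπ,
        (Commute.refl d).zpow_left i, mul_inv_cancel_right]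
  · exact hconj
  · rw [hρ.2, hconj]

variable [DecidableEq α]

/-- Starting at `x`, both permutations agree until `f` is about to return to `x`; there the swap
redirects to `y`. -/
lemma sameCycle_swap_mul [Finite α] (hxy : ¬ f.SameCycle x y) : (swap x y * f).SameCycle x y := by
  have along_cycle (n : ℕ) : (swap x y * f).SameCycle x ((f ^ n) x) := by
    induction n with
    | zero => rfl
    | succ n ih =>
      by_cases hx : (f ^ (n + 1)) x = x
      · rw [hx]
      have hy : (f ^ (n + 1)) x ≠ y := fun h => hxy ⟨(n + 1 : ℕ), h⟩
      have hstep : (swap x y * f) ((f ^ n) x) = (f ^ (n + 1)) x := by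
        rw [pow_succ', mul_apply] at hx hy ⊢
        exact swap_apply_of_ne_of_ne hx hy
      exact hstep ▸ sameCycle_apply_right.2 ih
  obtain ⟨n, hn⟩ := (sameCycle_symm_apply_right.2 (.refl f x)).exists_nat_pow_eq
  have hlast : (swap x y * f) ((f ^ n) x) = y := by simp [hn]
  simpa only [hlast] using sameCycle_apply_right.2 (along_cycle n)

lemma sameCycle_swap_mul_of_sameCycle [Finite α] (hxy : ¬ f.SameCycle x y)
    (hab : f.SameCycle a b) : (swap x y * f).SameCycle a b := by
  refine sameCycle_of_forall_sameCycle_apply (fun v => ?_) hab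
  have hmerge := sameCycle_swap_mul hxy
  have hv : (swap x y * f).SameCycle v (swap x y (f v)) := sameCycle_apply_right.2 (.refl _ v)
  rcases eq_or_ne (f v) x with hx | hx
  · rw [hx, swap_apply_left] at hv
    exact hx ▸ hv.trans hmerge.symm
  rcases eq_or_ne (f v) y with hy | hy
  · rw [hy, swap_apply_right] at hv
    exact hy ▸ hv.trans hmerge
  rwa [swap_apply_of_ne_of_ne hx hy] at hv

lemma swap_eq_swap_iff (hab : a ≠ b) : swap x y = swap a b ↔ s(x, y) = s(a, b) := by
  constructor
  · intro h
    have hb : swap x y a = b := by rw [h, swap_apply_left]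
    rcases (swap_apply_ne_self_iff.1 (hb.trans_ne hab.symm)).2 with rfl | rfl
    · rw [← hb, swap_apply_left]
    · rw [← hb, swap_apply_right, Sym2.eq_swap]
  · rintro h
    rcases Sym2.eq_iff.1 h with ⟨rfl, rfl⟩ | ⟨rfl, rfl⟩
    · rfl
    · exact swap_comm _ _

lemma eq_swap_apply_of_isSwap (hf : f.IsSwap) (hx : f x ≠ x) : f = swap x (f x) := by
  obtain ⟨a, b, -, rfl⟩ := hf
  rcases eq_or_eq_of_swap_apply_ne_self hx with rfl | rfl
  · rw [swap_apply_left]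
  · rw [swap_apply_right, swap_comm]

end Perm

lemma isCycleOn_univ_finRotate (m : ℕ) : (finRotate (m + 1)).IsCycleOn Set.univ := by
  suffices h0 : ∀ v, (finRotate (m + 1)).SameCycle 0 v from
    isCycleOn_univ_iff.2 fun a b => (h0 a).symm.trans (h0 b)
  intro v
  induction v using Fin.induction with
  | zero => rfl
  | succ i ih =>
    rw [← Fin.coeSucc_eq_succ, ← finRotate_apply]
    exact sameCycle_apply_right.2 ih

/-! ### Partial products -/

section PartialProduct

variable {M N : Type*} [Monoid M] [Monoid N] {k n : ℕ}

/-- The product `f (ℓ - 1) * ⋯ * f 0`. Its factors come in the opposite order to those of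
`Fin.partialProd`, so that for permutations `f 0` is applied first. -/
def revPartialProd (f : Fin k → M) (ℓ : Fin (k + 1)) : M :=
  ((List.ofFn f).take ℓ).reverse.prod

lemma revPartialProd_zero (f : Fin k → M) : revPartialProd f 0 = 1 := by
  simp [revPartialProd]

lemma revPartialProd_succ (f : Fin k → M) (ℓ : Fin k) :
    revPartialProd f ℓ.succ = f ℓ * revPartialProd f ℓ.castSucc := by
  simp [revPartialProd, List.take_add_one]

lemma revPartialProd_last (f : Fin k → M) :
    revPartialProd f (Fin.last k) = (List.ofFn f).reverse.prod := by
  rw [revPartialProd, List.take_of_length_le (by simp)]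

lemma revPartialProd_comp (φ : M →* N) (f : Fin k → M) (ℓ : Fin (k + 1)) :
    revPartialProd (φ ∘ f) ℓ = φ (revPartialProd f ℓ) := by
  simp only [revPartialProd, map_list_prod, List.map_reverse, List.map_take, List.map_ofFn]

lemma apply_revPartialProd_eq {α β : Type*} {τ : Fin k → Perm α} {φ : α → β}
    {ℓ : Fin (k + 1)} (hφ : ∀ j : Fin k, j.castSucc < ℓ → ∀ v, φ (τ j v) = φ v) (v : α) :
    φ (revPartialProd τ ℓ v) = φ v := by
  induction ℓ using Fin.induction with
  | zero => rw [revPartialProd_zero, one_apply]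
  | succ ℓ ih =>
    rw [revPartialProd_succ, mul_apply, hφ ℓ ℓ.castSucc_lt_succ,
      ih fun j hj => hφ j (hj.trans ℓ.castSucc_lt_succ)]

lemma isMinFact_iff {τ : Fin k → Perm (Fin n)} : IsMinFact τ ↔
    (∀ ℓ, (τ ℓ).IsSwap) ∧ revPartialProd τ (Fin.last k) = finRotate n := by
  rw [revPartialProd_last, IsMinFact]

lemma Tcount_conj (τ : Fin k → Perm (Fin n)) (π : Perm (Fin n)) (v : Fin n) :
    Tcount (MulAut.conj π ∘ τ) (π v) = Tcount τ v := by
  simp [Tcount]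

lemma Mcount_eq_card (τ : Fin k → Perm (Fin n)) (v : Fin n) :
    Mcount τ v = (Finset.univ.filter fun ℓ : Fin k =>
      revPartialProd τ ℓ.succ v ≠ revPartialProd τ ℓ.castSucc v).card := by
  simp only [revPartialProd_succ]
  rfl

lemma Mcount_conj (τ : Fin k → Perm (Fin n)) (π : Perm (Fin n)) (v : Fin n) :
    Mcount (MulAut.conj π ∘ τ) (π v) = Mcount τ v := by
  have hprod (ℓ) : revPartialProd (MulAut.conj π ∘ τ) ℓ = π * revPartialProd τ ℓ * π⁻¹ :=
    revPartialProd_comp (MulAut.conj π).toMonoidHom τ ℓ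
  simp [Mcount_eq_card, hprod]

end PartialProduct

/-! ### The graph of a family of transpositions -/

section SwapGraph

variable {α ι : Type*} [DecidableEq α]

/-- The graph on `α` whose edges are the pairs of points exchanged by a member of the family `τ`. -/
def swapGraph (τ : ι → Perm α) : SimpleGraph α where
  Adj v w := v ≠ w ∧ ∃ ℓ, τ ℓ = swap v w
  symm := ⟨fun v w h => by rwa [ne_comm, swap_comm]⟩
  loopless := ⟨fun _ h => h.1 rfl⟩

variable {τ : ι → Perm α}

lemma swapGraph_adj_apply (hτ : ∀ ℓ, (τ ℓ).IsSwap) {ℓ : ι} {v : α} (hv : τ ℓ v ≠ v) :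
    (swapGraph τ).Adj v (τ ℓ v) :=
  ⟨hv.symm, ℓ, eq_swap_apply_of_isSwap (hτ ℓ) hv⟩

lemma ncard_edgeSet_swapGraph_le [Finite ι] :
    (swapGraph τ).edgeSet.ncard ≤ (Set.range τ).ncard := by
  refine Set.ncard_le_ncard_of_injOn (Sym2.lift ⟨swap, swap_comm⟩) ?_ ?_
  · rintro ⟨v, w⟩ ⟨-, ℓ, hℓ⟩
    exact ⟨ℓ, hℓ⟩
  · rintro ⟨x, y⟩ - ⟨v, w⟩ hvw heq
    exact (swap_eq_swap_iff hvw.1).1 heq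

lemma isTree_swapGraph_and_injective [Finite ι] [Finite α] (hconn : (swapGraph τ).Connected)
    (hcard : Nat.card ι + 1 = Nat.card α) : (swapGraph τ).IsTree ∧ Function.Injective τ := by
  have hlower : Nat.card ι ≤ (swapGraph τ).edgeSet.ncard := by
    have := hconn.card_vert_le_card_edgeSet_add_one
    rwa [← hcard, add_le_add_iff_right] at this
  have hupper : (Set.range τ).ncard ≤ Nat.card ι := by
    rw [← Set.image_univ, ← Set.ncard_univ]
    exact Set.ncard_image_le
  have hmid := ncard_edgeSet_swapGraph_le (τ := τ)
  constructor
  · rw [SimpleGraph.isTree_iff_connected_and_card, ← hcard, Nat.card_coe_set_eq]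
    exact ⟨hconn, by omega⟩
  · rw [← Set.injOn_univ, ← Set.ncard_image_iff, Set.image_univ, Set.ncard_univ]
    omega

lemma Tcount_eq_ncard_neighborSet {k n : ℕ} {τ : Fin k → Perm (Fin n)} (hτ : ∀ ℓ, (τ ℓ).IsSwap)
    (hinj : Function.Injective τ) (v : Fin n) :
    Tcount τ v = ((swapGraph τ).neighborSet v).ncard := by
  rw [Tcount, ← Set.ncard_coe_finset]
  simp only [Finset.coe_filter, Finset.mem_univ, true_and]
  refine Set.ncard_congr (fun ℓ _ => τ ℓ v) (fun ℓ hℓ => swapGraph_adj_apply hτ hℓ) ?_ ?_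
  · intro ℓ ℓ' hℓ hℓ' heq
    apply hinj
    rw [eq_swap_apply_of_isSwap (hτ ℓ) hℓ, eq_swap_apply_of_isSwap (hτ ℓ') hℓ', heq]
  · rintro w ⟨hvw, ℓ, hℓ⟩
    have hw : τ ℓ v = w := by rw [hℓ, swap_apply_left]
    exact ⟨ℓ, by simpa only [Set.mem_ofPred_eq, hw] using hvw.symm, hw⟩

section Sequence

variable {k : ℕ} {τ : Fin k → Perm α}

lemma connected_swapGraph [Nonempty α] (hτ : ∀ ℓ, (τ ℓ).IsSwap)
    (hcycle : (revPartialProd τ (Fin.last k)).IsCycleOn Set.univ) : (swapGraph τ).Connected := by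
  have hstep (ℓ : Fin k) (v : α) :
      (swapGraph τ).connectedComponentMk (τ ℓ v) = (swapGraph τ).connectedComponentMk v := by
    by_cases hv : τ ℓ v = v
    · rw [hv]
    · exact SimpleGraph.ConnectedComponent.eq.2 (swapGraph_adj_apply hτ hv).reachable.symm
  exact ⟨fun a b => SimpleGraph.ConnectedComponent.eq.1 <| apply_eq_of_sameCycle
    (apply_revPartialProd_eq fun ℓ _ => hstep ℓ) (isCycleOn_univ_iff.1 hcycle a b)⟩

/-- An edge of an acyclic graph is a bridge, and the earlier transpositions preserve the components
left after its removal. -/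
lemma not_sameCycle_revPartialProd (hτ : ∀ ℓ, (τ ℓ).IsSwap) (hinj : Function.Injective τ)
    (hacyc : (swapGraph τ).IsAcyclic) {ℓ : Fin k} {x y : α} (hxy : x ≠ y)
    (hℓ : τ ℓ = swap x y) : ¬ (revPartialProd τ ℓ.castSucc).SameCycle x y := by
  intro hcycle
  have hbridge := SimpleGraph.isBridge_iff.1
    (SimpleGraph.isAcyclic_iff_forall_adj_isBridge.1 hacyc ⟨hxy, ℓ, hℓ⟩)
  refine hbridge (SimpleGraph.ConnectedComponent.eq.1 (apply_eq_of_sameCycle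
    (apply_revPartialProd_eq fun j hj v => ?_) hcycle))
  by_cases hv : τ j v = v
  · rw [hv]
  refine SimpleGraph.ConnectedComponent.eq.2 (SimpleGraph.Adj.reachable ?_)
  refine SimpleGraph.deleteEdges_adj.2 ⟨(swapGraph_adj_apply hτ hv).symm, fun hedge => ?_⟩
  have hjℓ : τ j = τ ℓ := by
    rw [hℓ, eq_swap_apply_of_isSwap (hτ j) hv, swap_comm]
    exact (swap_eq_swap_iff hxy).2 hedge
  exact (Fin.castSucc_lt_castSucc_iff.1 hj).ne (hinj hjℓ)

lemma sameCycle_revPartialProd [Finite α] (hτ : ∀ ℓ, (τ ℓ).IsSwap) (hinj : Function.Injective τ)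
    (hacyc : (swapGraph τ).IsAcyclic) {ℓ : Fin (k + 1)} {j : Fin k} (hj : j.castSucc < ℓ)
    {x y : α} (hxy : x ≠ y) (hτj : τ j = swap x y) : (revPartialProd τ ℓ).SameCycle x y := by
  induction ℓ using Fin.induction with
  | zero => exact absurd hj (Fin.not_lt_zero _)
  | succ ℓ ih =>
    obtain ⟨a, b, hab, hℓ⟩ := hτ ℓ
    have hnew := not_sameCycle_revPartialProd hτ hinj hacyc hab hℓ
    rw [revPartialProd_succ, hℓ]
    rcases (Fin.le_castSucc_iff.2 hj).lt_or_eq with hlt | heq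
    · exact sameCycle_swap_mul_of_sameCycle hnew (ih hlt)
    · obtain rfl := Fin.castSucc_injective _ heq
      rw [hτj] at hℓ
      rw [← hℓ]
      exact sameCycle_swap_mul (not_sameCycle_revPartialProd hτ hinj hacyc hxy hτj)

/-- A theorem of Dénes: in any order, the transpositions along the edges of a tree multiply to a
full cycle. -/
lemma isCycleOn_univ_revPartialProd [Finite α] (hτ : ∀ ℓ, (τ ℓ).IsSwap)
    (hinj : Function.Injective τ) (htree : (swapGraph τ).IsTree) :
    (revPartialProd τ (Fin.last k)).IsCycleOn Set.univ := by
  refine isCycleOn_univ_iff.2 fun a b => ?_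
  obtain ⟨w⟩ := htree.connected a b
  induction w with
  | nil => rfl
  | cons hadj _ ih =>
    obtain ⟨hne, j, hj⟩ := hadj
    exact (sameCycle_revPartialProd hτ hinj htree.isAcyclic j.castSucc_lt_last hne hj).trans ih

end Sequence

end SwapGraph

/-! ### Parent functions of rooted trees -/

section ParentMap

variable {m : ℕ}

/-- `p ℓ` is the parent of the vertex `ℓ.succ` in a tree rooted at `0`. The absence of cycles is
expressed by a height that strictly decreases from a vertex to its parent. -/
def IsParentMap (p : Fin m → Fin (m + 1)) : Prop :=
  ∃ h : Fin (m + 1) → ℕ, ∀ ℓ, h (p ℓ) < h ℓ.succ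

/-- The transpositions along the edges of the tree with parent function `p`, the edge from `ℓ.succ`
to its parent being used at time `ℓ`. -/
def parentSwap (p : Fin m → Fin (m + 1)) (ℓ : Fin m) : Perm (Fin (m + 1)) :=
  swap ℓ.succ (p ℓ)

/-- The graph whose edges join each vertex `ℓ.succ` to its parent `p ℓ`. -/
abbrev parentGraph (p : Fin m → Fin (m + 1)) : SimpleGraph (Fin (m + 1)) :=
  swapGraph (parentSwap p)

lemma parentGraph_adj {p : Fin m → Fin (m + 1)} {v w : Fin (m + 1)} :
    (parentGraph p).Adj v w ↔
      v ≠ w ∧ ∃ ℓ, (ℓ.succ = v ∧ p ℓ = w) ∨ (ℓ.succ = w ∧ p ℓ = v) := by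
  refine and_congr_right fun hvw => exists_congr fun ℓ => ?_
  rw [parentSwap, swap_eq_swap_iff hvw, Sym2.eq_iff]

namespace IsParentMap

variable {p q : Fin m → Fin (m + 1)}

@[elab_as_elim]
lemma induction {P : Fin (m + 1) → Prop} (hp : IsParentMap p) (root : P 0)
    (child : ∀ ℓ, P (p ℓ) → P ℓ.succ) (v : Fin (m + 1)) : P v := by
  obtain ⟨h, hh⟩ := hp
  induction v using WellFounded.induction (measure h).wf with
  | _ v ih =>
    cases v using Fin.cases with
    | zero => exact root
    | succ ℓ => exact child ℓ (ih _ (hh ℓ))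

lemma ne_succ (hp : IsParentMap p) (ℓ : Fin m) : p ℓ ≠ ℓ.succ := by
  obtain ⟨h, hh⟩ := hp
  exact ne_of_apply_ne h (hh ℓ).ne

lemma isSwap (hp : IsParentMap p) (ℓ : Fin m) : (parentSwap p ℓ).IsSwap :=
  ⟨_, _, (hp.ne_succ ℓ).symm, rfl⟩

lemma adj (hp : IsParentMap p) (ℓ : Fin m) : (parentGraph p).Adj ℓ.succ (p ℓ) :=
  ⟨(hp.ne_succ ℓ).symm, ℓ, rfl⟩

lemma connected (hp : IsParentMap p) : (parentGraph p).Connected := by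
  have hroot (v) : (parentGraph p).Reachable v 0 := by
    induction v using hp.induction with
    | root => rfl
    | child ℓ ih => exact (hp.adj ℓ).reachable.trans ih
  exact ⟨fun v w => (hroot v).trans (hroot w).symm⟩

lemma isTree (hp : IsParentMap p) : (parentGraph p).IsTree :=
  (isTree_swapGraph_and_injective hp.connected (by simp)).1

lemma parentSwap_injective (hp : IsParentMap p) : Function.Injective (parentSwap p) :=
  (isTree_swapGraph_and_injective hp.connected (by simp)).2

lemma eq_of_adj (hp : IsParentMap p) (hadj : ∀ ℓ, (parentGraph q).Adj ℓ.succ (p ℓ)) : p = q := by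
  suffices h : ∀ v ℓ, ℓ.succ = v → p ℓ = q ℓ from funext fun ℓ => h _ ℓ rfl
  intro v
  induction v using hp.induction with
  | root => exact fun ℓ hℓ => absurd hℓ ℓ.succ_ne_zero
  | child ℓ ih =>
    intro i hi
    obtain rfl : ℓ = i := Fin.succ_injective _ hi.symm
    obtain ⟨-, j, ⟨hj, hqj⟩ | ⟨hj, hqj⟩⟩ := parentGraph_adj.1 (hadj ℓ)
    · rw [← hqj, Fin.succ_injective _ hj]
    · obtain ⟨h, hh⟩ := hp
      have hdown := hh j
      rw [ih j hj, hqj, hj] at hdown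
      exact absurd hdown (hh ℓ).asymm

end IsParentMap

lemma exists_adj_dist_lt {V : Type*} {G : SimpleGraph V} (hG : G.Connected) {r v : V}
    (hv : v ≠ r) : ∃ u, G.Adj v u ∧ G.dist u r < G.dist v r := by
  obtain ⟨w, hw⟩ := hG.exists_walk_length_eq_dist v r
  cases w with
  | nil => exact absurd rfl hv
  | cons hadj w' =>
    refine ⟨_, hadj, (SimpleGraph.dist_le w').trans_lt ?_⟩
    rw [← hw, SimpleGraph.Walk.length_cons]
    exact Nat.lt_succ_self _

lemma exists_isParentMap_adj {G : SimpleGraph (Fin (m + 1))} (hG : G.Connected) :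
    ∃ p, IsParentMap p ∧ ∀ ℓ : Fin m, G.Adj ℓ.succ (p ℓ) := by
  choose p hadj hdist using fun ℓ : Fin m => exists_adj_dist_lt hG ℓ.succ_ne_zero
  exact ⟨p, ⟨fun v => G.dist v 0, hdist⟩, hadj⟩

lemma exists_parentGraph_eq {t : SimpleGraph (Fin (m + 1))} (ht : t.IsTree) :
    ∃ p, IsParentMap p ∧ parentGraph p = t := by
  obtain ⟨p, hp, hadj⟩ := exists_isParentMap_adj ht.connected
  have hle : parentGraph p ≤ t := by
    intro v w hvw
    obtain ⟨-, ℓ, ⟨rfl, rfl⟩ | ⟨rfl, rfl⟩⟩ := parentGraph_adj.1 hvw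
    exacts [hadj ℓ, (hadj ℓ).symm]
  exact ⟨p, hp, hle.antisymm ((SimpleGraph.isTree_iff_minimal_connected.1 ht).2 hp.connected hle)⟩

/-- Trees on `Fin (m + 1)`, rooted at `0`, correspond to their parent functions. -/
noncomputable def treeEquiv (m : ℕ) : {p : Fin m → Fin (m + 1) // IsParentMap p} ≃
    {t : SimpleGraph (Fin (m + 1)) // t.IsTree} :=
  Equiv.ofBijective (fun p => ⟨parentGraph p.1, p.2.isTree⟩) <| by
    constructor
    · rintro ⟨p, hp⟩ ⟨q, _⟩ heq
      have heq : parentGraph p = parentGraph q := congrArg Subtype.val heq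
      exact Subtype.ext (hp.eq_of_adj fun ℓ => heq ▸ hp.adj ℓ)
    · rintro ⟨t, ht⟩
      obtain ⟨p, hp, rfl⟩ := exists_parentGraph_eq ht
      exact ⟨⟨p, hp⟩, rfl⟩

end ParentMap

/-! ### Minimal factorizations -/

section Factorization

variable {m : ℕ}

lemma parentSwap_relabel (p : Fin m → Fin (m + 1)) (ε : Perm (Fin m)) (κ : Perm (Fin (m + 1)))
    (hκ : ∀ ℓ, κ ℓ.succ = (ε ℓ).succ) :
    parentSwap (κ ∘ p ∘ ε.symm) = MulAut.conj κ ∘ parentSwap p ∘ ε.symm := by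
  funext ℓ
  simp [parentSwap, ← swap_apply_apply, hκ]

lemma IsParentMap.relabel {p : Fin m → Fin (m + 1)} (hp : IsParentMap p) {ε : Perm (Fin m)}
    {κ : Perm (Fin (m + 1))} (hκ : ∀ ℓ, κ ℓ.succ = (ε ℓ).succ) : IsParentMap (κ ∘ p ∘ ε.symm) := by
  obtain ⟨h, hh⟩ := hp
  refine ⟨h ∘ κ.symm, fun ℓ => ?_⟩
  have hℓ : κ.symm ℓ.succ = (ε.symm ℓ).succ := by rw [symm_apply_eq, hκ, apply_symm_apply]
  simpa [hℓ] using hh (ε.symm ℓ)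

lemma isMinFact_conj_parentSwap_iff {p : Fin m → Fin (m + 1)} (hp : IsParentMap p)
    (π : Perm (Fin (m + 1))) : IsMinFact (MulAut.conj π ∘ parentSwap p) ↔
      π * revPartialProd (parentSwap p) (Fin.last m) * π⁻¹ = finRotate (m + 1) := by
  have hswap (ℓ) : ((MulAut.conj π ∘ parentSwap p) ℓ).IsSwap :=
    ⟨π ℓ.succ, π (p ℓ), π.injective.ne (hp.ne_succ ℓ).symm, (swap_apply_apply ..).symm⟩
  rw [isMinFact_iff, and_iff_right hswap]
  exact Eq.congr_left (revPartialProd_comp (MulAut.conj π).toMonoidHom _ _)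

lemma IsParentMap.existsUnique_isMinFact {p : Fin m → Fin (m + 1)} (hp : IsParentMap p) :
    ∃! π : Perm (Fin (m + 1)), π 0 = 0 ∧ IsMinFact (MulAut.conj π ∘ parentSwap p) := by
  simp only [isMinFact_conj_parentSwap_iff hp]
  exact existsUnique_conj_eq
    (isCycleOn_univ_revPartialProd hp.isSwap hp.parentSwap_injective hp.isTree)
    (isCycleOn_univ_finRotate m) 0 0

/-- Choosing for each vertex other than `0` a transposition towards `0` uses every transposition
once; each vertex is then renamed after the time of its transposition. -/
lemma exists_eq_conj_parentSwap {τ : Fin m → Perm (Fin (m + 1))} (hτ : IsMinFact τ) :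
    ∃ (p : Fin m → Fin (m + 1)) (π : Perm (Fin (m + 1))),
      IsParentMap p ∧ π 0 = 0 ∧ τ = MulAut.conj π ∘ parentSwap p := by
  obtain ⟨hswap, hprod⟩ := isMinFact_iff.1 hτ
  obtain ⟨p, hp, hadj⟩ := exists_isParentMap_adj
    (connected_swapGraph hswap (hprod ▸ isCycleOn_univ_finRotate m))
  choose e he using fun ℓ => (hadj ℓ).2
  have he : τ ∘ e = parentSwap p := funext he
  have he_inj : Function.Injective e := .of_comp (he ▸ hp.parentSwap_injective)
  let ε : Perm (Fin m) := Equiv.ofBijective e (Finite.injective_iff_bijective.1 he_inj)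
  let κ : Perm (Fin (m + 1)) := decomposeFin.symm (0, ε)
  have hκ (ℓ) : κ ℓ.succ = (ε ℓ).succ := by simp [κ]
  have hτε : τ = parentSwap p ∘ ε.symm := (Equiv.eq_comp_symm ε _ _).2 he
  refine ⟨κ ∘ p ∘ ε.symm, κ⁻¹, hp.relabel hκ, inv_eq_iff_eq.2 (by simp [κ]), ?_⟩
  rw [parentSwap_relabel p ε κ hκ, ← hτε, map_inv]
  exact (MulAut.conj κ).toEquiv.symm_comp_eq _ _ |>.2 rfl |>.symm

lemma eq_of_conj_parentSwap_eq {p q : Fin m → Fin (m + 1)} (hp : IsParentMap p)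
    (hq : IsParentMap q) {ρ : Perm (Fin (m + 1))} (h0 : ρ 0 = 0)
    (h : MulAut.conj ρ ∘ parentSwap p = parentSwap q) : p = q := by
  have hswap (ℓ) : swap (ρ ℓ.succ) (ρ (p ℓ)) = swap ℓ.succ (q ℓ) := by
    rw [swap_apply_apply]
    exact congrFun h ℓ
  have hfix (v) : ρ v = v := by
    induction v using hp.induction with
    | root => exact h0
    | child ℓ ih =>
      have hℓ := hswap ℓ
      rw [ih, swap_eq_swap_iff (hq.ne_succ ℓ).symm, Sym2.eq_iff] at hℓ
      exact hℓ.elim And.left fun hℓ => absurd hℓ.2 (hp.ne_succ ℓ)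
  funext ℓ
  simpa [hfix] using DFunLike.congr_fun (hswap ℓ) ℓ.succ

/-- The permutation fixing the root whose action on the vertices turns the transpositions of the
tree with parent function `p` into a minimal factorization. -/
noncomputable def IsParentMap.relabeling {p : Fin m → Fin (m + 1)} (hp : IsParentMap p) :
    Perm (Fin (m + 1)) :=
  hp.existsUnique_isMinFact.choose

lemma IsParentMap.relabeling_zero {p : Fin m → Fin (m + 1)} (hp : IsParentMap p) :
    hp.relabeling 0 = 0 :=
  hp.existsUnique_isMinFact.choose_spec.1.1

lemma IsParentMap.isMinFact_relabeling {p : Fin m → Fin (m + 1)} (hp : IsParentMap p) :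
    IsMinFact (MulAut.conj hp.relabeling ∘ parentSwap p) :=
  hp.existsUnique_isMinFact.choose_spec.1.2

/-- Minimal factorizations of the full cycle on `Fin (m + 1)` correspond to parent functions. -/
noncomputable def factorEquiv (m : ℕ) : {p : Fin m → Fin (m + 1) // IsParentMap p} ≃
    {τ : Fin m → Perm (Fin (m + 1)) // IsMinFact τ} :=
  Equiv.ofBijective
    (fun p => ⟨MulAut.conj p.2.relabeling ∘ parentSwap p.1, p.2.isMinFact_relabeling⟩) <| by
    constructor
    · rintro ⟨p, hp⟩ ⟨q, hq⟩ heq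
      refine Subtype.ext (eq_of_conj_parentSwap_eq hp hq
        (ρ := hq.relabeling⁻¹ * hp.relabeling) ?_ ?_)
      · rw [mul_apply, hp.relabeling_zero, inv_eq_iff_eq, hq.relabeling_zero]
      · have heq : MulAut.conj hp.relabeling ∘ parentSwap p =
          MulAut.conj hq.relabeling ∘ parentSwap q := congrArg Subtype.val heq
        rw [map_mul, map_inv, MulAut.coe_mul, Function.comp_assoc, heq]
        exact (MulAut.conj hq.relabeling).toEquiv.symm_comp_eq _ _ |>.2 rfl
    · rintro ⟨τ, hτ⟩
      obtain ⟨p, π, hp, hπ, rfl⟩ := exists_eq_conj_parentSwap hτ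
      obtain rfl : hp.relabeling = π := hp.existsUnique_isMinFact.unique
        ⟨hp.relabeling_zero, hp.isMinFact_relabeling⟩ ⟨hπ, hτ⟩
      exact ⟨⟨p, hp⟩, rfl⟩

end Factorization

/-! ### The greedy increasing path -/

section Greedy

variable {m : ℕ}

/-- Repeated positions of `x` are deleted one at a time from the front. -/
lemma iterate_eq_and_card_eq {α : Type*} [DecidableEq α] {N : α → α} {x : Fin (m + 1) → α}
    (hstep : ∀ ℓ : Fin m, x ℓ.succ = x ℓ.castSucc ∨ x ℓ.succ = N (x ℓ.castSucc))
    (hlast : N (x (Fin.last m)) = x (Fin.last m)) {K : ℕ} (hK : m ≤ K) :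
    N^[K] (x 0) = x (Fin.last m) ∧
      ((Finset.range K).filter fun k => N^[k + 1] (x 0) ≠ N^[k] (x 0)).card =
        (Finset.univ.filter fun ℓ : Fin m => x ℓ.succ ≠ x ℓ.castSucc).card := by
  induction m generalizing K with
  | zero =>
    have hfix (k) : N^[k] (x 0) = x 0 := Function.iterate_fixed hlast k
    simp [hfix]
  | succ m ih =>
    have ih {K} (hK : m ≤ K) := ih (x := fun ℓ => x ℓ.succ) (fun ℓ => hstep ℓ.succ) hlast hK
    rw [Fin.card_filter_univ_succ', Fin.castSucc_zero]
    by_cases hstay : x (Fin.succ 0) = x 0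
    · rw [if_neg (not_not.2 hstay), zero_add, ← hstay]
      exact ih (by omega)
    · obtain ⟨K, rfl⟩ : ∃ K', K = K' + 1 := ⟨K - 1, by omega⟩
      have hmove : N (x 0) = x (Fin.succ 0) := ((hstep 0).resolve_left hstay).symm
      have ih := ih (K := K) (by omega)
      rw [← hmove] at ih hstay
      refine ⟨ih.1, ?_⟩
      rw [← hmove, add_comm (ite _ _ _), ← Nat.count_eq_card_filter_range, Nat.count_succ',
        Nat.count_eq_card_filter_range]
      exact congrArg (· + ite _ 1 0) ih.2

lemma greedyNext_eq_of_isLeast {n : ℕ} {t : SimpleGraph (Fin n)} {v w : Fin n}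
    (hw : IsLeast {u | t.Adj v u ∧ v < u} w) : greedyNext t v = w := by
  classical
  rw [greedyNext, dif_pos ⟨w, by simpa using hw.1⟩]
  exact (Finset.isLeast_min' _ _).unique (by rwa [Finset.coe_filter_univ])

lemma greedyNext_eq_self {n : ℕ} {t : SimpleGraph (Fin n)} {v : Fin n}
    (hv : ∀ u, t.Adj v u → ¬ v < u) : greedyNext t v = v := by
  classical
  rw [greedyNext, dif_neg]
  rintro ⟨u, hu⟩
  obtain ⟨-, hadj, hlt⟩ := Finset.mem_filter.1 hu
  exact hv u hadj hlt

/-- The trajectory of the root under the transpositions attached to `p`. -/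
def rootPath (p : Fin m → Fin (m + 1)) (ℓ : Fin (m + 1)) : Fin (m + 1) :=
  revPartialProd (parentSwap p) ℓ 0

variable {p : Fin m → Fin (m + 1)}

lemma rootPath_zero : rootPath p 0 = 0 := by
  rw [rootPath, revPartialProd_zero, one_apply]

lemma rootPath_succ_eq_swap (ℓ : Fin m) :
    rootPath p ℓ.succ = swap ℓ.succ (p ℓ) (rootPath p ℓ.castSucc) := by
  rw [rootPath, revPartialProd_succ, mul_apply, parentSwap, rootPath]

lemma rootPath_le (ℓ : Fin (m + 1)) : rootPath p ℓ ≤ ℓ := by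
  induction ℓ using Fin.induction with
  | zero => rw [rootPath_zero]
  | succ ℓ ih =>
    rw [rootPath_succ_eq_swap, swap_apply_def]
    split_ifs with h1 h2
    · exact absurd (h1 ▸ ih) ℓ.castSucc_lt_succ.not_ge
    · rfl
    · exact ih.trans ℓ.castSucc_lt_succ.le

lemma rootPath_castSucc_lt_succ (ℓ : Fin m) : rootPath p ℓ.castSucc < ℓ.succ :=
  (rootPath_le _).trans_lt ℓ.castSucc_lt_succ

lemma rootPath_succ (ℓ : Fin m) : rootPath p ℓ.succ =
    if p ℓ = rootPath p ℓ.castSucc then ℓ.succ else rootPath p ℓ.castSucc := by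
  rw [rootPath_succ_eq_swap]
  split_ifs with h
  · rw [h, swap_apply_right]
  · exact swap_apply_of_ne_of_ne (rootPath_castSucc_lt_succ ℓ).ne (Ne.symm h)

lemma parent_lt_of_rootPath_eq {ℓ : Fin (m + 1)} {j : Fin m} (h : rootPath p ℓ = j.succ) :
    p j < j.succ := by
  induction ℓ using Fin.induction with
  | zero => exact absurd (rootPath_zero.symm.trans h).symm j.succ_ne_zero
  | succ ℓ ih =>
    rw [rootPath_succ] at h
    split_ifs at h with hℓ
    · obtain rfl := Fin.succ_injective _ h
      exact hℓ ▸ rootPath_castSucc_lt_succ ℓ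
    · exact ih h

/-- The edge from a vertex of the trajectory to a larger neighbour is yet to be used. -/
lemma lt_of_adj_rootPath {ℓ u : Fin (m + 1)} (hadj : (parentGraph p).Adj (rootPath p ℓ) u)
    (hlt : rootPath p ℓ < u) : ℓ < u := by
  induction ℓ using Fin.induction with
  | zero => rwa [rootPath_zero] at hlt
  | succ ℓ ih =>
    rw [rootPath_succ] at hadj hlt
    split_ifs at hadj hlt with hℓ
    · exact hlt
    · refine (Fin.castSucc_lt_iff_succ_le.1 (ih hadj hlt)).lt_of_ne ?_
      rintro rfl
      obtain ⟨-, j, ⟨hj, hpj⟩ | ⟨hj, hpj⟩⟩ := parentGraph_adj.1 hadj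
      · have := parent_lt_of_rootPath_eq hj.symm
        rw [hj, hpj] at this
        exact this.asymm hlt
      · exact hℓ (Fin.succ_injective _ hj ▸ hpj)

lemma rootPath_succ_eq_or (ℓ : Fin m) : rootPath p ℓ.succ = rootPath p ℓ.castSucc ∨
    rootPath p ℓ.succ = greedyNext (parentGraph p) (rootPath p ℓ.castSucc) := by
  rw [rootPath_succ]
  split_ifs with h
  · refine .inr (greedyNext_eq_of_isLeast ⟨⟨?_, rootPath_castSucc_lt_succ ℓ⟩, ?_⟩).symm
    · exact parentGraph_adj.2 ⟨(rootPath_castSucc_lt_succ ℓ).ne, ℓ, .inr ⟨rfl, h⟩⟩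
    · rintro u ⟨hadj, hlt⟩
      exact Fin.castSucc_lt_iff_succ_le.1 (lt_of_adj_rootPath hadj hlt)
  · exact .inl rfl

lemma greedyNext_rootPath_last :
    greedyNext (parentGraph p) (rootPath p (Fin.last m)) = rootPath p (Fin.last m) :=
  greedyNext_eq_self fun u hadj hlt => (lt_of_adj_rootPath hadj hlt).not_ge u.le_last

lemma greedyLast_parentGraph (p : Fin m → Fin (m + 1)) :
    greedyLast (parentGraph p) 0 = rootPath p (Fin.last m) := by
  rw [greedyLast, ← rootPath_zero (p := p)]
  exact (iterate_eq_and_card_eq rootPath_succ_eq_or greedyNext_rootPath_last m.le_succ).1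

lemma greedyLenFrom_parentGraph (p : Fin m → Fin (m + 1)) :
    greedyLenFrom (parentGraph p) 0 = Mcount (parentSwap p) 0 := by
  rw [greedyLenFrom, Mcount_eq_card, ← rootPath_zero (p := p)]
  exact (iterate_eq_and_card_eq rootPath_succ_eq_or greedyNext_rootPath_last m.le_succ).2

end Greedy

/-! ### Comparison of the statistics -/

section Statistics

variable {m : ℕ} {p : Fin m → Fin (m + 1)}

lemma deg1_parentGraph (hp : IsParentMap p) : deg1 (parentGraph p) = Tcount (parentSwap p) 0 := by
  rw [Tcount_eq_ncard_neighborSet hp.isSwap hp.parentSwap_injective, deg1, dif_pos m.succ_pos]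
  rfl

lemma deg2'_parentGraph (hp : IsParentMap p) :
    deg2' (parentGraph p) = Tcount (parentSwap p) (rootPath p (Fin.last m)) := by
  rw [Tcount_eq_ncard_neighborSet hp.isSwap hp.parentSwap_injective, deg2', dif_pos m.succ_pos,
    ← greedyLast_parentGraph]
  rfl

lemma L1len_parentGraph (p : Fin m → Fin (m + 1)) :
    L1len (parentGraph p) = Mcount (parentSwap p) 0 := by
  rw [← greedyLenFrom_parentGraph, L1len, dif_pos m.succ_pos]
  rfl

lemma relabeling_rootPath_last (hp : IsParentMap p) :
    hp.relabeling (rootPath p (Fin.last m)) = finRotate (m + 1) 0 := by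
  rw [← (isMinFact_conj_parentSwap_iff hp _).1 hp.isMinFact_relabeling, mul_apply, mul_apply,
    inv_eq_iff_eq.2 hp.relabeling_zero.symm, rootPath]

lemma exists_equiv_isTree (m : ℕ) :
    ∃ e : {τ : Fin m → Perm (Fin (m + 1)) // IsMinFact τ} ≃
        {t : SimpleGraph (Fin (m + 1)) // t.IsTree},
      ∀ τ, deg1 (e τ).1 = Tcount τ.1 0 ∧ deg2' (e τ).1 = Tcount τ.1 (finRotate (m + 1) 0) ∧
        L1len (e τ).1 = Mcount τ.1 0 := by
  refine ⟨(factorEquiv m).symm.trans (treeEquiv m), (factorEquiv m).surjective.forall.2 ?_⟩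
  rintro ⟨p, hp⟩
  rw [Equiv.trans_apply, symm_apply_apply]
  refine ⟨?_, ?_, ?_⟩
  · calc deg1 (parentGraph p) = Tcount (parentSwap p) 0 := deg1_parentGraph hp
      _ = Tcount (MulAut.conj hp.relabeling ∘ parentSwap p) 0 := by
        rw [← Tcount_conj _ hp.relabeling, hp.relabeling_zero]
  · calc deg2' (parentGraph p) = Tcount (parentSwap p) (rootPath p (Fin.last m)) :=
        deg2'_parentGraph hp
      _ = Tcount (MulAut.conj hp.relabeling ∘ parentSwap p) (finRotate (m + 1) 0) := by
        rw [← Tcount_conj _ hp.relabeling, relabeling_rootPath_last]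
  · calc L1len (parentGraph p) = Mcount (parentSwap p) 0 := L1len_parentGraph p
      _ = Mcount (MulAut.conj hp.relabeling ∘ parentSwap p) 0 := by
        rw [← Mcount_conj _ hp.relabeling, hp.relabeling_zero]

end Statistics

end MinimalFactorization

/-- The bijection `𝔐_n ↔ 𝔠_n` transports `(T_1, T_2, M_1)` to `(deg_1, deg'_2, |L_1|)`:
the two counts agree.  Vertex `1` is index `0` and vertex `2` is index `1`. -/
theorem stmt_2 (n : ℕ) (hn : 2 ≤ n) (i j k : ℕ) :
    Nat.card {τ : Fin (n - 1) → Equiv.Perm (Fin n) //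
        IsMinFact τ ∧ Tcount τ ⟨0, by omega⟩ = i ∧ Tcount τ ⟨1, by omega⟩ = j ∧
          Mcount τ ⟨0, by omega⟩ = k} =
    Nat.card {t : SimpleGraph (Fin n) //
        t.IsTree ∧ deg1 t = i ∧ deg2' t = j ∧ L1len t = k} := by
  obtain ⟨m, rfl⟩ : ∃ m, n = m + 1 := ⟨n - 1, by omega⟩
  obtain ⟨e, he⟩ := MinimalFactorization.exists_equiv_isTree m
  have hrot : (⟨1, by omega⟩ : Fin (m + 1)) = finRotate (m + 1) 0 := by
    rw [finRotate_apply, zero_add]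
    ext
    rw [Fin.val_one', Nat.mod_eq_of_lt (by omega)]
  rw [hrot]
  change Nat.card {τ : Fin m → Equiv.Perm (Fin (m + 1)) // IsMinFact τ ∧ Tcount τ 0 = i ∧
    Tcount τ (finRotate (m + 1) 0) = j ∧ Mcount τ 0 = k} = _
  refine Nat.card_congr ((Equiv.subtypeSubtypeEquivSubtypeInter _ _).symm.trans
    ((e.subtypeEquiv fun τ => ?_).trans (Equiv.subtypeSubtypeEquivSubtypeInter _ _)))
  obtain ⟨hdeg1, hdeg2, hlen⟩ := he τ
  rw [hdeg1, hdeg2, hlen]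
end
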